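/- arXiv:2001.00849 — 4 statements merged into one kernel-verified Lean document; each statement's English description precedes it below -/
import Mathlib

section
/- If 𝓗 is a family of edge-ordered graphs (each with at least one edge) with finite order chromatic number χ'_<(𝓗) = r+1 (where r ≥ 1), then lex(n, 𝓗) = (1 - 1/r + o(1)) n²/2 as n → ∞; that is, for every ε > 0 there is N such that for all n ≥ N, |lex(n, 𝓗) - (1 - 1/r)·n²/2| ≤ ε·n². -/
/-- An edge-ordered graph: a finite simple graph on vertex set `Fin nv`
together with a labeling of (potential) edges.  The edge-order is the order of
the labels; the labeling is required to be injective on the edge set via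
`EOGraph.Valid`. -/
structure EOGraph where
  nv : ℕ
  graph : SimpleGraph (Fin nv)
  label : Sym2 (Fin nv) → ℕ

namespace EOGraph

/-- The labeling is injective on the edge set, hence defines a linear order on the edges. -/
def Valid (G : EOGraph) : Prop :=
  ∀ e ∈ G.graph.edgeSet, ∀ f ∈ G.graph.edgeSet, G.label e = G.label f → e = f

/-- The number of edges of an edge-ordered graph. -/
noncomputable def edges (G : EOGraph) : ℕ := G.graph.edgeSet.ncard

/-- `G.Contains H`: some subgraph of `G`, with the edge-order induced from `G`,
is isomorphic to `H` (via a graph isomorphism preserving the relative order of edges). -/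
def Contains (G H : EOGraph) : Prop :=
  ∃ f : Fin H.nv ↪ Fin G.nv,
    (∀ a b, H.graph.Adj a b → G.graph.Adj (f a) (f b)) ∧
    ∀ a b c d, H.graph.Adj a b → H.graph.Adj c d →
      (H.label s(a, b) < H.label s(c, d) ↔ G.label s(f a, f b) < G.label s(f c, f d))

/-- `G` avoids `H` if no subgraph of `G` (with the induced edge-order) is isomorphic to `H`. -/
def Avoids (G H : EOGraph) : Prop := ¬ G.Contains H

/-- `G` avoids a family if it avoids every member. -/
def AvoidsFam (G : EOGraph) (F : Set EOGraph) : Prop := ∀ H ∈ F, G.Avoids H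

/-- Isomorphism of edge-ordered graphs. -/
def Iso (G H : EOGraph) : Prop :=
  ∃ f : Fin G.nv ≃ Fin H.nv,
    (∀ a b, G.graph.Adj a b ↔ H.graph.Adj (f a) (f b)) ∧
    ∀ a b c d, G.graph.Adj a b → G.graph.Adj c d →
      (G.label s(a, b) < G.label s(c, d) ↔ H.label s(f a, f b) < H.label s(f c, f d))

end EOGraph

/-- A simple graph `G` can avoid the family `F` if some linear order on its edges
(given by a labeling injective on the edge set) makes it into an edge-ordered graph
avoiding `F`. -/
def CanAvoid {n : ℕ} (G : SimpleGraph (Fin n)) (F : Set EOGraph) : Prop :=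
  ∃ L : Sym2 (Fin n) → ℕ, (EOGraph.mk n G L).Valid ∧ (EOGraph.mk n G L).AvoidsFam F

/-- The order chromatic number of a family of edge-ordered graphs: the least chromatic
number of a finite simple graph that cannot avoid the family (`⊤` if every finite
simple graph can avoid it). -/
noncomputable def orderChrom (F : Set EOGraph) : ℕ∞ :=
  ⨅ (n : ℕ) (G : SimpleGraph (Fin n)) (_ : ¬ CanAvoid G F), G.chromaticNumber

/-- The Turán number `lex(n, F)`: the maximum number of edges of an edge-ordered graph
on `n` vertices avoiding the family `F`. -/
noncomputable def lexFam (n : ℕ) (F : Set EOGraph) : ℕ :=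
  sSup {m : ℕ | ∃ G : EOGraph, G.nv = n ∧ G.Valid ∧ G.AvoidsFam F ∧ G.edges = m}

/-- Build a symmetric labeling from a function of the (min, max) of the two endpoints. -/
def symLabel {N : ℕ} (f : Fin N → Fin N → ℕ) : Sym2 (Fin N) → ℕ :=
  Sym2.lift ⟨fun a b => f (min a b) (max a b), fun a b => by
    show f (min a b) (max a b) = f (min b a) (max b a)
    rw [min_comm, max_comm]⟩

/-- The edge-ordered path on `k` vertices `0, 1, …, k-1`, where the edge `{i, i+1}`
gets label `l[i]`. -/
def pathEO (k : ℕ) (l : List ℕ) : EOGraph where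
  nv := k
  graph := SimpleGraph.fromRel (fun a b => (a : ℕ) + 1 = (b : ℕ))
  label := symLabel fun a _ => l.getD (a : ℕ) 0

/-!
If `G₀` cannot avoid `F`, then a graph that admits an `F`-avoiding edge-order contains no copy of
`G₀`; conversely, every graph of chromatic number below `orderChrom F` admits such an order. With
`orderChrom F = r + 1` this puts `lexFam n F` between the size of the Turán graph `turanGraph n r`
and `extremalNumber n G₀` for some `(r + 1)`-colorable graph `G₀`. By Erdős–Stone the Turán density
of `G₀` is at most `1 - 1 / r`, so both bounds are `(1 - 1 / r + o(1)) n² / 2`. Mathlib has the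
minimum degree form of Erdős–Stone; deleting a vertex of minimum degree turns it into a bound on
the increments of `extremalNumber · G₀`, hence on the Turán density.
-/

section TuranDensity

open Filter Finset SimpleGraph Topology

variable {W : Type*} {H : SimpleGraph W}

theorem tendsto_natCast_choose_atTop {k : ℕ} (hk : k ≠ 0) :
    Tendsto (fun n : ℕ ↦ (n.choose k : ℝ)) atTop atTop := by
  have h_pow : Tendsto (fun n : ℕ ↦ ((n + 1 - k : ℕ) : ℝ) ^ k / k.factorial) atTop atTop :=
    ((tendsto_pow_atTop hk).comp <| tendsto_natCast_atTop_atTop.comp <|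
      (tendsto_sub_atTop_nat k).comp (tendsto_add_atTop_nat 1)).atTop_div_const (by positivity)
  exact tendsto_atTop_mono (Nat.pow_le_choose k) h_pow

theorem turanDensity_le_of_eventually_extremalNumber_succ_le {c : ℝ}
    (h : ∀ᶠ n : ℕ in atTop,
      (extremalNumber (n + 1) H : ℝ) ≤ extremalNumber n H + c * n) :
    turanDensity H ≤ c := by
  obtain ⟨N, hN⟩ := eventually_atTop.1 h
  set g : ℕ → ℝ := fun n ↦ extremalNumber n H - c * n.choose 2 with hg
  have hg_anti : AntitoneOn g (Set.Ici N) := by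
    refine antitoneOn_nat_Ici_of_succ_le fun n hn ↦ ?_
    have h_choose : ((n + 1).choose 2 : ℝ) = n + n.choose 2 := by
      rw [Nat.choose_succ_succ' n 1, Nat.choose_one_right, Nat.cast_add]
    simp only [hg, h_choose]
    linarith [hN n hn]
  have h_lim : Tendsto (fun n : ℕ ↦ c + g N / n.choose 2) atTop (𝓝 (c + 0)) :=
    ((tendsto_natCast_choose_atTop two_ne_zero).const_div_atTop _).const_add c
  rw [add_zero] at h_lim
  refine le_of_tendsto_of_tendsto (tendsto_turanDensity H) h_lim ?_
  filter_upwards [eventually_ge_atTop N,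
    (tendsto_natCast_choose_atTop two_ne_zero).eventually_gt_atTop 0] with n hn h_pos
  have h_le : extremalNumber n H - c * n.choose 2 ≤ g N := hg_anti Set.self_mem_Ici hn hn
  rw [div_le_iff₀ h_pos, add_mul, div_mul_cancel₀ _ h_pos.ne']
  linarith

theorem extremalNumber_succ_le_of_minDegree {n : ℕ} {d : ℝ} (hd : 0 ≤ d)
    (h : ∀ {G : SimpleGraph (Fin (n + 1))} [DecidableRel G.Adj], d ≤ G.minDegree → H ⊑ G) :
    (extremalNumber (n + 1) H : ℝ) ≤ extremalNumber n H + d := by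
  have h_iff := extremalNumber_le_iff_of_nonneg (V := Fin (n + 1)) H
    (add_nonneg (extremalNumber n H).cast_nonneg hd)
  rw [Fintype.card_fin] at h_iff
  refine h_iff.2 fun G _ hG ↦ ?_
  have h_lt : (G.minDegree : ℝ) < d := lt_of_not_ge fun h_ge ↦ hG (h h_ge)
  obtain ⟨v, hv⟩ := G.exists_minimal_degree_vertex
  have h_del := card_edgeFinset_deleteIncidenceSet_le_extremalNumber hG v
  rw [card_edgeFinset_deleteIncidenceSet, ← hv, Fintype.card_fin, Nat.add_sub_cancel,
    Nat.sub_le_iff_le_add] at h_del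
  calc (#G.edgeFinset : ℝ) ≤ extremalNumber n H + G.minDegree := mod_cast h_del
    _ ≤ extremalNumber n H + d := by gcongr

theorem turanDensity_le_of_forall_minDegree {c : ℝ} (hc : 0 ≤ c)
    (h : ∀ d > c, ∀ᶠ n : ℕ in atTop, ∀ {G : SimpleGraph (Fin n)} [DecidableRel G.Adj],
      d * n ≤ G.minDegree → H ⊑ G) :
    turanDensity H ≤ c := by
  refine le_of_forall_gt_imp_ge_of_dense fun b hb ↦ ?_
  obtain ⟨d, hcd, hdb⟩ := exists_between hb
  apply turanDensity_le_of_eventually_extremalNumber_succ_le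
  have h_large : ∀ᶠ n : ℕ in atTop, d / (b - d) ≤ n :=
    tendsto_natCast_atTop_atTop.eventually_ge_atTop _
  filter_upwards [(tendsto_add_atTop_nat 1).eventually (h d hcd), h_large] with n hn h_large
  have hd : 0 ≤ d := hc.trans hcd.le
  have h_slack : d * (n + 1 : ℕ) ≤ b * n := by
    rw [div_le_iff₀ (sub_pos.2 hdb)] at h_large
    push_cast
    linarith
  calc (extremalNumber (n + 1) H : ℝ) ≤ extremalNumber n H + d * (n + 1 : ℕ) :=
        extremalNumber_succ_le_of_minDegree (by positivity) hn
    _ ≤ extremalNumber n H + b * n := by gcongr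

theorem turanDensity_le_of_colorable [Finite W] {r : ℕ} (hH : H.Colorable (r + 1)) :
    turanDensity H ≤ 1 - 1 / r := by
  classical
  have := Fintype.ofFinite W
  obtain ⟨C⟩ := hH
  have h_multipartite : H ⊑ completeEquipartiteGraph (r + 1) (Fintype.card W) :=
    isContained_completeEquipartiteGraph_of_colorable C _ fun _ ↦ Fintype.card_subtype_le _
  have hr : (0 : ℝ) ≤ 1 - 1 / r := by
    rw [sub_nonneg, one_div]
    exact Nat.cast_inv_le_one r
  refine turanDensity_le_of_forall_minDegree hr fun d hd ↦ ?_
  filter_upwards [eventually_completeEquipartiteGraph_isContained_of_minDegree (sub_pos.2 hd) r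
    (Fintype.card W)] with n hn G _ hG
  exact h_multipartite.trans (hn (by rwa [add_sub_cancel]))

theorem eventually_extremalNumber_le_of_turanDensity_lt {c : ℝ} (h : turanDensity H < c) :
    ∀ᶠ n : ℕ in atTop, (extremalNumber n H : ℝ) ≤ c * n ^ 2 / 2 := by
  have hc : 0 ≤ c :=
    (ge_of_tendsto' (tendsto_turanDensity H) fun n ↦ by positivity).trans h.le
  filter_upwards [(tendsto_turanDensity H).eventually_le_const h,
    (tendsto_natCast_choose_atTop two_ne_zero).eventually_gt_atTop 0] with n hn h_pos
  calc (extremalNumber n H : ℝ) ≤ c * n.choose 2 := (div_le_iff₀ h_pos).1 hn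
    _ ≤ c * (n ^ 2 / 2) := by
      gcongr
      exact Nat.choose_le_pow_div 2 n
    _ = c * n ^ 2 / 2 := (mul_div_assoc ..).symm

end TuranDensity

section TuranGraph

open Finset SimpleGraph

variable {r : ℕ}

theorem turanGraph_colorable (hr : 0 < r) (n : ℕ) : (turanGraph n r).Colorable r :=
  ⟨Coloring.mk (fun v ↦ (⟨v % r, Nat.mod_lt _ hr⟩ : Fin r)) fun h_adj h_eq ↦
    h_adj (Fin.mk.inj h_eq)⟩

/-- The two quantities have the same increments under `n ↦ n + r`, so it suffices to compare them
for `n < r`. -/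
theorem le_card_edgeFinset_turanGraph (hr : 0 < r) (n : ℕ) :
    (1 - 1 / (r : ℝ)) * n ^ 2 / 2 - r / 2 ≤ #(turanGraph n r).edgeFinset := by
  induction n using Nat.strong_induction_on with
  | _ n ih =>
    obtain hn | hn := lt_or_ge n r
    · have h_card : #(turanGraph n r).edgeFinset = n.choose 2 := by
        simp [card_edgeFinset_turanGraph, Nat.mod_eq_of_lt hn]
      have h_nonneg : 0 ≤ 1 / (r : ℝ) * n ^ 2 := by positivity
      have hn' : (n : ℝ) ≤ r := mod_cast hn.le
      rw [h_card, Nat.cast_choose_two]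
      linarith
    · obtain ⟨m, rfl⟩ := Nat.exists_eq_add_of_le' hn
      have h_incr : (1 - 1 / (r : ℝ)) * (m + r) ^ 2 / 2 =
          (1 - 1 / (r : ℝ)) * m ^ 2 / 2 + m * (r - 1) + r * (r - 1) / 2 := by
        field_simp
        ring
      have hm := ih m (by omega)
      rw [card_edgeFinset_turanGraph_add]
      push_cast [Nat.cast_choose_two, Nat.cast_sub (Nat.one_le_iff_ne_zero.2 hr.ne')]
      linarith

end TuranGraph

section OrderChrom

open Filter Finset SimpleGraph

variable {F : Set EOGraph} {m n r : ℕ}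

theorem CanAvoid.of_isContained {G : SimpleGraph (Fin m)} {G' : SimpleGraph (Fin n)}
    (h : CanAvoid G' F) (hGG' : G ⊑ G') : CanAvoid G F := by
  obtain ⟨L, hL_valid, hL_avoids⟩ := h
  obtain ⟨f⟩ := hGG'
  refine ⟨fun e ↦ L (e.map f), fun e he e' he' h_eq ↦ ?_, fun H hH ⟨g, hg_adj, hg_lt⟩ ↦ ?_⟩
  · exact Sym2.map.injective f.injective <|
      hL_valid _ (f.toHom.map_mem_edgeSet he) _ (f.toHom.map_mem_edgeSet he') h_eq
  · exact hL_avoids H hH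
      ⟨g.trans f.toEmbedding, fun a b hab ↦ f.toHom.map_adj (hg_adj a b hab), hg_lt⟩

theorem lexFam_le_iff :
    lexFam n F ≤ m ↔
      ∀ ⦃G : SimpleGraph (Fin n)⦄ [DecidableRel G.Adj], CanAvoid G F → #G.edgeFinset ≤ m := by
  have h_bdd : BddAbove
      {k : ℕ | ∃ G : EOGraph, G.nv = n ∧ G.Valid ∧ G.AvoidsFam F ∧ G.edges = k} := by
    refine ⟨Nat.card (Sym2 (Fin n)), ?_⟩
    rintro _ ⟨G, rfl, -, -, rfl⟩
    exact Set.ncard_le_card _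
  rw [lexFam, csSup_le_iff' h_bdd]
  constructor
  · rintro h G _ ⟨L, hL_valid, hL_avoids⟩
    refine h _ ⟨⟨n, G, L⟩, rfl, hL_valid, hL_avoids, ?_⟩
    rw [EOGraph.edges, ← coe_edgeFinset, Set.ncard_coe_finset]
  · rintro h _ ⟨G, rfl, hG_valid, hG_avoids, rfl⟩
    classical
    rw [EOGraph.edges, ← coe_edgeFinset, Set.ncard_coe_finset]
    exact h ⟨G.label, hG_valid, hG_avoids⟩

theorem lexFam_le_extremalNumber {G₀ : SimpleGraph (Fin m)} (h : ¬ CanAvoid G₀ F) (n : ℕ) :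
    lexFam n F ≤ extremalNumber n G₀ := by
  refine lexFam_le_iff.2 fun G _ hG ↦ ?_
  have h_free : G₀.Free G := fun h_sub ↦ h (hG.of_isContained h_sub)
  simpa only [Fintype.card_fin] using card_edgeFinset_le_extremalNumber h_free

theorem orderChrom_le_natCast_iff {k : ℕ} :
    orderChrom F ≤ k ↔ ∃ (m : ℕ) (G : SimpleGraph (Fin m)), ¬ CanAvoid G F ∧ G.Colorable k := by
  simp only [← chromaticNumber_le_iff_colorable, ← ENat.lt_natCast_add_one_iff, orderChrom,
    iInf_lt_iff, exists_prop]

theorem le_lexFam_of_lt_orderChrom (hr : 0 < r) (h : r < orderChrom F) (n : ℕ) :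
    (1 - 1 / (r : ℝ)) * n ^ 2 / 2 - r / 2 ≤ lexFam n F := by
  have h_can : CanAvoid (turanGraph n r) F := by
    by_contra h_cannot
    exact h.not_ge (orderChrom_le_natCast_iff.2 ⟨n, _, h_cannot, turanGraph_colorable hr n⟩)
  exact (le_card_edgeFinset_turanGraph hr n).trans (mod_cast lexFam_le_iff.1 le_rfl h_can)

theorem eventually_lexFam_le_of_orderChrom_le (h : orderChrom F ≤ r + 1) {c : ℝ}
    (hc : 1 - 1 / r < c) :
    ∀ᶠ n : ℕ in atTop, (lexFam n F : ℝ) ≤ c * n ^ 2 / 2 := by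
  obtain ⟨m, G₀, h_cannot, h_col⟩ := orderChrom_le_natCast_iff.1 (mod_cast h)
  filter_upwards [eventually_extremalNumber_le_of_turanDensity_lt
    ((turanDensity_le_of_colorable h_col).trans_lt hc)] with n hn
  exact (Nat.cast_le.2 (lexFam_le_extremalNumber h_cannot n)).trans hn

end OrderChrom

/-- Erdős–Stone–Simonovits for edge-ordered graphs: if the order
chromatic number of the family `F` is `r + 1` with `r ≥ 1`, then
`lex(n, F) = (1 - 1/r + o(1)) n²/2`. -/
theorem lex_eq_ess_of_orderChrom_finite (F : Set EOGraph)
    (hval : ∀ H ∈ F, H.Valid) (hne : ∀ H ∈ F, H.graph.edgeSet.Nonempty)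
    (r : ℕ) (hr : 1 ≤ r) (hchi : orderChrom F = ((r : ℕ∞) + 1)) :
    ∀ ε : ℝ, 0 < ε → ∃ N : ℕ, ∀ n : ℕ, N ≤ n →
      |(lexFam n F : ℝ) - (1 - 1 / (r : ℝ)) * (n : ℝ) ^ 2 / 2| ≤ ε * (n : ℝ) ^ 2 := by
  intro ε hε
  have h_lower := le_lexFam_of_lt_orderChrom hr (hchi ▸ ENat.lt_natCast_add_one_iff.2 le_rfl)
  have h_upper := eventually_lexFam_le_of_orderChrom_le hchi.le
    (lt_add_of_pos_right (1 - 1 / (r : ℝ)) hε)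
  have h_large : ∀ᶠ n : ℕ in Filter.atTop, r / 2 ≤ ε * (n : ℝ) ^ 2 :=
    (((Filter.tendsto_pow_atTop two_ne_zero).comp tendsto_natCast_atTop_atTop).const_mul_atTop
      hε).eventually_ge_atTop _
  refine Filter.eventually_atTop.1 ?_
  filter_upwards [h_upper, h_large] with n h_upper_n h_large_n
  have h_nonneg : 0 ≤ ε * (n : ℝ) ^ 2 := by positivity
  rw [abs_le]
  constructor <;> linarith [h_lower n]
end

section
/- The order chromatic number of a family 𝓗 of edge-ordered graphs is infinite if and only if one of the four canonical edge-orders of K_n avoids 𝓗 for all n; that is, if and only if there is a type t ∈ {min, max, inverse min, inverse max} such that for every n the t-labeling of K_n avoids 𝓗. -/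
/-- The four canonical labelings of the complete graph `K_n` (vertices `0,…,n-1`
standing for `v_1,…,v_n`).  For `i < j` (1-based) the edge `v_i v_j` gets label
`n*i + j` (min-labeling, `t = 0`), `n*j + i` (max-labeling, `t = 1`),
`n*i - j` (inverse min-labeling, `t = 2`) or `n*j - i` (inverse max-labeling, `t = 3`). -/
def canonK (t : Fin 4) (n : ℕ) : EOGraph where
  nv := n
  graph := ⊤
  label := symLabel fun a b =>
    ![n * ((a : ℕ) + 1) + ((b : ℕ) + 1),
      n * ((b : ℕ) + 1) + ((a : ℕ) + 1),
      n * ((a : ℕ) + 1) - ((b : ℕ) + 1),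
      n * ((b : ℕ) + 1) - ((a : ℕ) + 1)] t

/-!
By Ramsey's theorem and compactness, every large ordered complete graph with distinct edge labels
has a large set of vertices on which the comparison of two labels depends only on the relative
position of the two edges. Transitivity leaves few such rules. After reversing the vertex order if
necessary, `v₁v₂` has a smaller label than `v₃v₄`. Then `v₁v₂ < v₂v₃` and `v₁v₃ < v₂v₄` are forced,
as otherwise a chain of shifted edges descends. Comparing `v₁v₄` with `v₂v₃` decides whether the
left or the right endpoints are compared first, and a homogeneous comparison of edges sharing that
endpoint breaks ties, so the edge-order is one of the four canonical ones. Thus every edge-order of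
a large complete graph contains a large canonical `K_n`. Hence, if each canonical type has some
member containing a graph of the family, a large enough complete graph cannot avoid the family.
Conversely, a canonical labelling avoiding the family can be restricted to every finite graph.
-/

section Ramsey

open Filter Finset

theorem exists_eventually_eq_const {α C : Type*} [Finite C] (U : Ultrafilter α) (f : α → C) :
    ∃ c, ∀ᶠ x in U, f x = c := by
  obtain ⟨c, hc⟩ := (U.map f).eq_pure_of_finite
  exact ⟨c, show {c} ∈ U.map f from hc ▸ rfl⟩

variable {α : Type*} {U : Ultrafilter α}

theorem eventually_notMem_finset (hU : (U : Filter α) ≤ cofinite) (s : Finset α) :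
    ∀ᶠ x in U, x ∉ s :=
  hU s.finite_toSet.compl_mem_cofinite

/-- The values of `d` on smaller sets are the iterated ultrafilter limits of the colours of the
`k`-element sets. -/
theorem exists_limit_colouring [DecidableEq α] {C : Type*} [Finite C]
    (hU : (U : Filter α) ≤ cofinite) (c : Finset α → C) (k : ℕ) :
    ∃ d : Finset α → C, (∀ s, #s = k → d s = c s) ∧
      ∀ s, #s < k → ∀ᶠ x in U, d (insert x s) = d s := by
  induction k generalizing c with
  | zero => exact ⟨c, fun _ _ => rfl, by simp⟩
  | succ k ih =>
    choose c' hc' using fun s => exists_eventually_eq_const U fun x => c (insert x s)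
    obtain ⟨d, hd, hlim⟩ := ih c'
    refine ⟨fun s => if #s = k + 1 then c s else d s, fun s hs => if_pos hs, fun s hs => ?_⟩
    have hs_ne : #s ≠ k + 1 := hs.ne
    rcases (Nat.lt_succ_iff.mp hs).lt_or_eq with hlt | heq
    · filter_upwards [hlim s hlt, eventually_notMem_finset hU s] with x hx hxs
      rw [if_neg (by rw [card_insert_of_notMem hxs]; omega), if_neg hs_ne, hx]
    · filter_upwards [hc' s, eventually_notMem_finset hU s] with x hx hxs
      rw [if_pos (by rw [card_insert_of_notMem hxs, heq]), if_neg hs_ne, hx, hd s heq]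

theorem exists_card_eq_forall_subset [DecidableEq α] (hU : (U : Filter α) ≤ cofinite)
    {P : Finset α → Prop} (hempty : P ∅) (hinsert : ∀ s, P s → ∀ᶠ x in U, P (insert x s))
    (m : ℕ) :
    ∃ t : Finset α, #t = m ∧ ∀ s ⊆ t, P s := by
  induction m with
  | zero => exact ⟨∅, rfl, fun s hs => subset_empty.mp hs ▸ hempty⟩
  | succ m ih =>
    obtain ⟨t, rfl, ht⟩ := ih
    have hext : ∀ᶠ x in U, ∀ s ∈ t.powerset, P (insert x s) :=
      (eventually_all_finset _).mpr fun s hs => hinsert s (ht s (mem_powerset.mp hs))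
    obtain ⟨x, hx, hxt⟩ := (hext.and (eventually_notMem_finset hU t)).exists
    refine ⟨insert x t, card_insert_of_notMem hxt, fun s hs => ?_⟩
    by_cases hxs : x ∈ s
    · simpa [hxs] using hx (s.erase x) (mem_powerset.mpr (subset_insert_iff.mp hs))
    · exact ht s ((subset_insert_iff_of_notMem hxs).mp hs)

theorem exists_finset_monochromatic [Infinite α] {C : ℕ → Type*} [∀ k, Finite (C k)]
    (c : ∀ k, Finset α → C k) (m : ℕ) :
    ∃ t : Finset α, #t = m ∧
      ∀ k, ∀ s ⊆ t, ∀ s' ⊆ t, #s = k → #s' = k → c k s = c k s' := by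
  classical
  have hU : (hyperfilter α : Filter α) ≤ cofinite := hyperfilter_le_cofinite
  choose d hdc hlim using fun k => exists_limit_colouring hU (c k) k
  obtain ⟨t, ht, hconst⟩ := exists_card_eq_forall_subset hU
    (P := fun s => ∀ k ≤ m, #s ≤ k → d k s = d k ∅) (by simp) (fun s hs => by
      have hstep : ∀ᶠ x in hyperfilter α, ∀ k ∈ Iic m, #s < k → d k (insert x s) = d k s := by
        simp only [eventually_all_finset, eventually_imp_distrib_left]
        exact fun k _ => hlim k s
      filter_upwards [hstep, eventually_notMem_finset hU s] with x hx hxs k hk hcard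
      rw [card_insert_of_notMem hxs] at hcard
      rw [hx k (mem_Iic.mpr hk) hcard, hs k hk (Nat.le_of_succ_le hcard)]) m
  refine ⟨t, ht, fun k s hs s' hs' hsk hsk' => ?_⟩
  have hkm : k ≤ m := hsk ▸ ht ▸ card_le_card hs
  rw [← hdc k s hsk, ← hdc k s' hsk', hconst s hs k hkm hsk.le, hconst s' hs' k hkm hsk'.le]

/-- Compactness: a sequence of colourings of `Fin N` without the desired set has an ultrafilter
limit on `ℕ` without it. -/
theorem exists_nat_forall_exists_finset_monochromatic {C : ℕ → Type*} [∀ k, Finite (C k)]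
    (m : ℕ) :
    ∃ N, ∀ c : ∀ k, Finset (Fin N) → C k, ∃ t : Finset (Fin N), #t = m ∧
      ∀ k, ∀ s ⊆ t, ∀ s' ⊆ t, #s = k → #s' = k → c k s = c k s' := by
  by_contra! hbad
  choose c hc using hbad
  let trace (N : ℕ) (s : Finset ℕ) : Finset (Fin N) := {i | (i : ℕ) ∈ s}
  choose d hd using fun k s =>
    exists_eventually_eq_const (hyperfilter ℕ) fun N => c N k (trace N s)
  obtain ⟨t, ht, hmono⟩ := exists_finset_monochromatic d m
  have hlarge : ∀ᶠ N in hyperfilter ℕ, ∀ i ∈ t, i < N :=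
    (eventually_all_finset t).mpr fun i _ => Nat.hyperfilter_le_atTop (eventually_gt_atTop i)
  have hlim : ∀ᶠ N in hyperfilter ℕ, ∀ s ∈ t.powerset, c N #s (trace N s) = d #s s :=
    (eventually_all_finset _).mpr fun s _ => hd #s s
  obtain ⟨N, hN, hcd⟩ := (hlarge.and hlim).exists
  have trace_map (s : Finset (Fin N)) : trace N (s.map Fin.valEmbedding) = s := by
    ext i
    simp [trace, Fin.val_inj]
  have map_trace : (trace N t).map Fin.valEmbedding = t := by
    ext i
    simpa [trace, Fin.exists_iff] using hN i
  have hsub : ∀ s ⊆ trace N t, s.map Fin.valEmbedding ⊆ t := fun s hs =>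
    map_trace ▸ map_subset_map.mpr hs
  have hval : ∀ s ⊆ trace N t, c N #s s = d #s (s.map Fin.valEmbedding) := fun s hs => by
    have h := hcd _ (mem_powerset.mpr (hsub s hs))
    rwa [trace_map, card_map] at h
  obtain ⟨k, s, hs, s', hs', rfl, hcard, hne⟩ :=
    hc N (trace N t) (by rw [← card_map Fin.valEmbedding, map_trace, ht])
  refine hne ?_
  rw [hval s hs, ← hcard, hval s' hs', hcard]
  exact hmono #s _ (hsub s hs) _ (hsub s' hs') (card_map _) (by rw [card_map, hcard])

end Ramsey

section Homogeneous

variable {V Λ : Type*} [LinearOrder V] [LinearOrder Λ] {M : Sym2 V → Λ}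

/-- For vertices `u 0 < ⋯ < u (k - 1)`, the pair in position `p` always has a smaller label than
the pair in position `q`. -/
def PatternLT (M : Sym2 V → Λ) {k : ℕ} (p q : Sym2 (Fin k)) : Prop :=
  ∀ u : Fin k → V, StrictMono u → M (p.map u) < M (q.map u)

/-- Order-indiscernibility of an injective edge labelling: the comparison of the labels of two
edges depends only on the relative positions of their endpoints. -/
def IsHomogeneous (M : Sym2 V → Λ) : Prop :=
  ∀ (k : ℕ) (p q : Sym2 (Fin k)), ¬p.IsDiag → ¬q.IsDiag → p ≠ q → PatternLT M p q ∨ PatternLT M q p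

theorem exists_nat_forall_exists_isHomogeneous (m : ℕ) :
    ∃ N, ∀ L : Sym2 (Fin N) → Λ, Set.InjOn L {e | ¬e.IsDiag} →
      ∃ g : Fin m ↪o Fin N, IsHomogeneous (L ∘ Sym2.map g) := by
  obtain ⟨N, hN⟩ := exists_nat_forall_exists_finset_monochromatic
    (C := fun k => Sym2 (Fin k) → Sym2 (Fin k) → Prop) m
  refine ⟨N, fun L hL => ?_⟩
  let colour (k : ℕ) (s : Finset (Fin N)) (p q : Sym2 (Fin k)) : Prop :=
    ∃ u : Fin k → Fin N, StrictMono u ∧ Finset.univ.image u = s ∧ L (p.map u) < L (q.map u)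
  have colour_image {k : ℕ} {u : Fin k → Fin N} (hu : StrictMono u) (p q : Sym2 (Fin k)) :
      colour k (Finset.univ.image u) p q ↔ L (p.map u) < L (q.map u) := by
    refine ⟨fun ⟨v, hv, himage, h⟩ => ?_, fun h => ⟨u, hu, rfl, h⟩⟩
    have hrange : Set.range v = Set.range u := by
      simpa using congrArg (fun s : Finset (Fin N) => (s : Set (Fin N))) himage
    rwa [(hv.range_inj hu).mp hrange] at h
  obtain ⟨t, ht, hmono⟩ := hN colour
  let g := t.orderEmbOfFin ht
  have hinvariant {k : ℕ} {u v : Fin k → Fin m} (hu : StrictMono u) (hv : StrictMono v)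
      (p q : Sym2 (Fin k)) :
      L (p.map (g ∘ u)) < L (q.map (g ∘ u)) ↔ L (p.map (g ∘ v)) < L (q.map (g ∘ v)) := by
    have hsub (w : Fin k → Fin m) : Finset.univ.image (g ∘ w) ⊆ t :=
      Finset.image_subset_iff.mpr fun i _ => t.orderEmbOfFin_mem ht (w i)
    have hcard {w : Fin k → Fin m} (hw : StrictMono w) : (Finset.univ.image (g ∘ w)).card = k := by
      rw [Finset.card_image_of_injective _ (g.injective.comp hw.injective), Finset.card_fin]
    rw [← colour_image (g.strictMono.comp hu), ← colour_image (g.strictMono.comp hv),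
      hmono k _ (hsub u) _ (hsub v) (hcard hu) (hcard hv)]
  refine ⟨g, fun k p q hp hq hpq => ?_⟩
  simp only [PatternLT, Function.comp_apply, Sym2.map_map]
  by_contra! ⟨⟨u, hu, hqp⟩, ⟨v, hv, hpq'⟩⟩
  have hgv := g.injective.comp hv.injective
  have heq : L (p.map (g ∘ v)) = L (q.map (g ∘ v)) :=
    le_antisymm hpq' (not_lt.mp (mt (hinvariant hu hv p q).mpr hqp.not_gt))
  exact hpq (Sym2.map.injective hgv (hL (mt (Sym2.isDiag_map hgv).mp hp)
    (mt (Sym2.isDiag_map hgv).mp hq) heq))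

theorem strictMono_toDual_comp_rev {k : ℕ} {x : Fin k → V} (hx : StrictMono x) :
    StrictMono (OrderDual.toDual ∘ x ∘ Fin.rev) :=
  fun _ _ hij => hx (Fin.rev_lt_rev.mpr hij)

namespace PatternLT

theorem lt_of_three {i₁ j₁ i₂ j₂ : Fin 3} (h : PatternLT M s(i₁, j₁) s(i₂, j₂)) {a b c : V}
    (hab : a < b) (hbc : b < c) :
    M s(![a, b, c] i₁, ![a, b, c] j₁) < M s(![a, b, c] i₂, ![a, b, c] j₂) :=
  h ![a, b, c] (by simp [hab, hbc])

theorem lt_of_four {i₁ j₁ i₂ j₂ : Fin 4} (h : PatternLT M s(i₁, j₁) s(i₂, j₂)) {a b c d : V}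
    (hab : a < b) (hbc : b < c) (hcd : c < d) :
    M s(![a, b, c, d] i₁, ![a, b, c, d] j₁) < M s(![a, b, c, d] i₂, ![a, b, c, d] j₂) :=
  h ![a, b, c, d] (by simp [hab, hbc, hcd])

theorem comp_ofDual {k : ℕ} {p q p' q' : Sym2 (Fin k)} (h : PatternLT M p q)
    (hp : p.map Fin.rev = p') (hq : q.map Fin.rev = q') :
    PatternLT (M ∘ Sym2.map OrderDual.ofDual) p' q' := by
  subst hp hq
  intro u hu
  simp only [Function.comp_apply, Sym2.map_map]
  exact h _ fun i j hij => hu (Fin.rev_lt_rev.mpr hij)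

theorem toDual_comp {k : ℕ} {p q : Sym2 (Fin k)} (h : PatternLT M p q) :
    PatternLT (OrderDual.toDual ∘ M) q p :=
  h

end PatternLT

namespace IsHomogeneous

theorem comp_ofDual (hM : IsHomogeneous M) :
    IsHomogeneous (M ∘ Sym2.map OrderDual.ofDual) := by
  intro k p q hp hq hpq
  have hrev (e : Sym2 (Fin k)) : (e.map Fin.rev).map Fin.rev = e := by
    simp [Sym2.map_map]
  have hdiag (e : Sym2 (Fin k)) : (e.map Fin.rev).IsDiag ↔ e.IsDiag :=
    Sym2.isDiag_map Fin.rev_injective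
  rcases hM k (p.map Fin.rev) (q.map Fin.rev) (by rwa [hdiag]) (by rwa [hdiag])
    ((Sym2.map.injective Fin.rev_injective).ne hpq) with h | h
  · exact .inl (h.comp_ofDual (hrev p) (hrev q))
  · exact .inr (h.comp_ofDual (hrev q) (hrev p))

theorem toDual_comp (hM : IsHomogeneous M) : IsHomogeneous (OrderDual.toDual ∘ M) :=
  fun k p q hp hq hpq => (hM k p q hp hq hpq).symm

variable {x : Fin 6 → V}

theorem patternLT_consecutive (hM : IsHomogeneous M) (hx : StrictMono x)
    (hsep : PatternLT (k := 4) M s(0, 1) s(2, 3)) : PatternLT (k := 3) M s(0, 1) s(1, 2) := by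
  refine (hM 3 _ _ (by decide) (by decide) (by decide)).resolve_right fun h => ?_
  have h₁ : M s(x 1, x 2) < M s(x 0, x 1) := h.lt_of_three (hx (by decide)) (hx (by decide))
  have h₂ : M s(x 2, x 3) < M s(x 1, x 2) := h.lt_of_three (hx (by decide)) (hx (by decide))
  have h₃ : M s(x 0, x 1) < M s(x 2, x 3) :=
    hsep.lt_of_four (hx (by decide)) (hx (by decide)) (hx (by decide))
  order

theorem patternLT_crossing (hM : IsHomogeneous M) (hx : StrictMono x)
    (hsep : PatternLT (k := 4) M s(0, 1) s(2, 3)) : PatternLT (k := 4) M s(0, 2) s(1, 3) := by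
  refine (hM 4 _ _ (by decide) (by decide) (by decide)).resolve_right fun h => ?_
  have h₁ : M s(x 1, x 3) < M s(x 0, x 2) :=
    h.lt_of_four (hx (by decide)) (hx (by decide)) (hx (by decide))
  have h₂ : M s(x 2, x 4) < M s(x 1, x 3) :=
    h.lt_of_four (hx (by decide)) (hx (by decide)) (hx (by decide))
  have h₃ : M s(x 3, x 5) < M s(x 2, x 4) :=
    h.lt_of_four (hx (by decide)) (hx (by decide)) (hx (by decide))
  have h₄ : M s(x 0, x 2) < M s(x 3, x 5) :=
    hsep.lt_of_four (hx (by decide)) (hx (by decide)) (hx (by decide))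
  order

theorem patternLT_common_right (hM : IsHomogeneous M) (hx : StrictMono x)
    (hsep : PatternLT (k := 4) M s(0, 1) s(2, 3)) (hnest : PatternLT (k := 4) M s(0, 3) s(1, 2)) :
    PatternLT (k := 3) M s(0, 2) s(1, 2) := by
  refine (hM 3 _ _ (by decide) (by decide) (by decide)).resolve_right fun h => ?_
  have h₁ : M s(x 1, x 3) < M s(x 0, x 3) := h.lt_of_three (hx (by decide)) (hx (by decide))
  have h₂ : M s(x 0, x 3) < M s(x 1, x 2) :=
    hnest.lt_of_four (hx (by decide)) (hx (by decide)) (hx (by decide))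
  have h₃ : M s(x 1, x 2) < M s(x 0, x 2) := h.lt_of_three (hx (by decide)) (hx (by decide))
  have h₄ : M s(x 0, x 2) < M s(x 1, x 3) :=
    (hM.patternLT_crossing hx hsep).lt_of_four (hx (by decide)) (hx (by decide)) (hx (by decide))
  order

variable {a b c d : V}

theorem lt_of_fst_lt (hM : IsHomogeneous M) (hx : StrictMono x)
    (hsep : PatternLT (k := 4) M s(0, 1) s(2, 3)) (hnest : PatternLT (k := 4) M s(0, 3) s(1, 2))
    (hab : a < b) (hcd : c < d) (hac : a < c) : M s(a, b) < M s(c, d) := by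
  rcases lt_trichotomy b c with hbc | rfl | hcb
  · exact hsep.lt_of_four hab hbc hcd
  · exact (hM.patternLT_consecutive hx hsep).lt_of_three hab hcd
  · rcases lt_trichotomy b d with hbd | rfl | hdb
    · exact (hM.patternLT_crossing hx hsep).lt_of_four hac hcb hbd
    · exact (hM.patternLT_common_right hx hsep hnest).lt_of_three hac hcd
    · exact hnest.lt_of_four hac hcd hdb

/-- Reversing both orders preserves `hsep` and swaps the two sides of `hnest`. -/
theorem lt_of_snd_lt (hM : IsHomogeneous M) (hx : StrictMono x)
    (hsep : PatternLT (k := 4) M s(0, 1) s(2, 3)) (hnest : PatternLT (k := 4) M s(1, 2) s(0, 3))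
    (hab : a < b) (hcd : c < d) (hbd : b < d) : M s(a, b) < M s(c, d) := by
  have hM' := hM.comp_ofDual.toDual_comp
  have hsep' := hsep.comp_ofDual (p' := s(2, 3)) (q' := s(0, 1)) (by decide) (by decide)
  have hnest' := hnest.comp_ofDual (p' := s(1, 2)) (q' := s(0, 3)) (by decide) (by decide)
  have hdc_ba := hM'.lt_of_fst_lt (strictMono_toDual_comp_rev hx) hsep'.toDual_comp
    hnest'.toDual_comp (OrderDual.toDual_lt_toDual.mpr hcd)
    (OrderDual.toDual_lt_toDual.mpr hab) (OrderDual.toDual_lt_toDual.mpr hbd)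
  rw [Sym2.eq_swap (a := a), Sym2.eq_swap (a := c)]
  exact hdc_ba

end IsHomogeneous

/-- The edge `ab` precedes the edge `cd`, where `a < b` and `c < d`, in the canonical edge-order of
type `t`, numbered as in `canonK`. -/
def CanonLT (t : Fin 4) (a b c d : V) : Prop :=
  ![a < c ∨ a = c ∧ b < d,
    b < d ∨ b = d ∧ a < c,
    a < c ∨ a = c ∧ d < b,
    b < d ∨ b = d ∧ c < a] t

/-- The labelling `M` induces the canonical edge-order of type `t` on the complete graph on `V`. -/
def IsCanonical (t : Fin 4) (M : Sym2 V → Λ) : Prop :=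
  ∀ a b c d, a < b → c < d → CanonLT t a b c d → M s(a, b) < M s(c, d)

theorem IsHomogeneous.exists_isCanonical_of_ascending {x : Fin 6 → V} (hM : IsHomogeneous M)
    (hx : StrictMono x) (hsep : PatternLT (k := 4) M s(0, 1) s(2, 3)) : ∃ t, IsCanonical t M := by
  rcases hM 4 s(0, 3) s(1, 2) (by decide) (by decide) (by decide) with hnest | hnest
  · have hfst {a b c d : V} := hM.lt_of_fst_lt (a := a) (b := b) (c := c) (d := d) hx hsep hnest
    rcases hM 3 s(0, 1) s(0, 2) (by decide) (by decide) (by decide) with hleft | hleft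
    · refine ⟨0, fun a b c d hab hcd h => ?_⟩
      rcases h with hac | ⟨rfl, hbd⟩
      exacts [hfst hab hcd hac, hleft.lt_of_three hab hbd]
    · refine ⟨2, fun a b c d hab hcd h => ?_⟩
      rcases h with hac | ⟨rfl, hdb⟩
      exacts [hfst hab hcd hac, hleft.lt_of_three hcd hdb]
  · have hsnd {a b c d : V} := hM.lt_of_snd_lt (a := a) (b := b) (c := c) (d := d) hx hsep hnest
    rcases hM 3 s(0, 2) s(1, 2) (by decide) (by decide) (by decide) with hright | hright
    · refine ⟨1, fun a b c d hab hcd h => ?_⟩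
      rcases h with hbd | ⟨rfl, hac⟩
      exacts [hsnd hab hcd hbd, hright.lt_of_three hac hcd]
    · refine ⟨3, fun a b c d hab hcd h => ?_⟩
      rcases h with hbd | ⟨rfl, hca⟩
      exacts [hsnd hab hcd hbd, hright.lt_of_three hca hab]

theorem IsHomogeneous.exists_isCanonical {x : Fin 6 → V} (hM : IsHomogeneous M)
    (hx : StrictMono x) :
    ∃ t, IsCanonical t M ∨ IsCanonical t (M ∘ Sym2.map OrderDual.ofDual) := by
  rcases hM 4 s(0, 1) s(2, 3) (by decide) (by decide) (by decide) with h | h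
  · exact (hM.exists_isCanonical_of_ascending hx h).imp fun _ => .inl
  · have hx' := strictMono_toDual_comp_rev hx
    have h' := h.comp_ofDual (p' := s(0, 1)) (q' := s(2, 3)) (by decide) (by decide)
    exact (hM.comp_ofDual.exists_isCanonical_of_ascending hx' h').imp fun _ => .inr

end Homogeneous

section Canonical

variable {V W Λ Λ' : Type*} [LinearOrder V] [LinearOrder W] [LinearOrder Λ] [LinearOrder Λ']
  {t : Fin 4}

theorem CanonLT.trichotomy (t : Fin 4) (a b c d : V) :
    CanonLT t a b c d ∨ a = c ∧ b = d ∨ CanonLT t c d a b := by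
  rcases lt_trichotomy a c with hac | hac | hac <;>
    rcases lt_trichotomy b d with hbd | hbd | hbd <;>
    fin_cases t <;> simp [CanonLT, *]

theorem CanonLT.comp_strictMono {f : V → W} (hf : StrictMono f) {a b c d : V}
    (h : CanonLT t a b c d) : CanonLT t (f a) (f b) (f c) (f d) := by
  fin_cases t <;> simpa [CanonLT, hf.lt_iff_lt, hf.injective.eq_iff] using h

theorem exists_lt_of_not_isDiag {e : Sym2 V} (he : ¬e.IsDiag) : ∃ a b, a < b ∧ e = s(a, b) := by
  induction e with | _ a b
  rcases lt_or_gt_of_ne (mt Sym2.mk_isDiag_iff.mpr he) with hab | hba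
  exacts [⟨a, b, hab, rfl⟩, ⟨b, a, hba, Sym2.eq_swap⟩]

namespace IsCanonical

variable {M : Sym2 V → Λ} {M' : Sym2 V → Λ'}

theorem comp_strictMono {f : W → V} (hM : IsCanonical t M) (hf : StrictMono f) :
    IsCanonical t (M ∘ Sym2.map f) :=
  fun _ _ _ _ hab hcd h => hM _ _ _ _ (hf hab) (hf hcd) (h.comp_strictMono hf)

theorem lt_iff (hM : IsCanonical t M) {a b c d : V} (hab : a < b) (hcd : c < d) :
    M s(a, b) < M s(c, d) ↔ CanonLT t a b c d := by
  refine ⟨fun hlt => ?_, hM a b c d hab hcd⟩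
  rcases CanonLT.trichotomy t a b c d with h | ⟨rfl, rfl⟩ | h
  exacts [h, absurd hlt (lt_irrefl _), absurd hlt (hM _ _ _ _ hcd hab h).not_gt]

theorem lt_iff_lt (hM : IsCanonical t M) (hM' : IsCanonical t M') {e e' : Sym2 V}
    (he : ¬e.IsDiag) (he' : ¬e'.IsDiag) : M e < M e' ↔ M' e < M' e' := by
  obtain ⟨a, b, hab, rfl⟩ := exists_lt_of_not_isDiag he
  obtain ⟨c, d, hcd, rfl⟩ := exists_lt_of_not_isDiag he'
  rw [hM.lt_iff hab hcd, hM'.lt_iff hab hcd]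

theorem injOn (hM : IsCanonical t M) : Set.InjOn M {e | ¬e.IsDiag} := by
  intro e he e' he' heq
  obtain ⟨a, b, hab, rfl⟩ := exists_lt_of_not_isDiag he
  obtain ⟨c, d, hcd, rfl⟩ := exists_lt_of_not_isDiag he'
  rcases CanonLT.trichotomy t a b c d with h | ⟨rfl, rfl⟩ | h
  exacts [absurd heq (hM _ _ _ _ hab hcd h).ne, rfl, absurd heq (hM _ _ _ _ hcd hab h).ne']

end IsCanonical

theorem exists_nat_forall_exists_isCanonical (n : ℕ) :
    ∃ N, ∀ L : Sym2 (Fin N) → Λ, Set.InjOn L {e | ¬e.IsDiag} →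
      ∃ t, ∃ f : Fin n → Fin N, f.Injective ∧ IsCanonical t (L ∘ Sym2.map f) := by
  obtain ⟨N, hN⟩ := exists_nat_forall_exists_isHomogeneous (Λ := Λ) (n + 6)
  refine ⟨N, fun L hL => ?_⟩
  obtain ⟨g, hg⟩ := hN L hL
  let ι : Fin n ↪o Fin (n + 6) := Fin.castAddOrderEmb 6
  obtain ⟨t, ht | ht⟩ := hg.exists_isCanonical (x := Fin.natAdd n) (Fin.strictMono_natAdd n)
  · refine ⟨t, g ∘ ι, g.injective.comp ι.injective, ?_⟩
    simpa only [Function.comp_assoc, ← Sym2.map_comp] using ht.comp_strictMono ι.strictMono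
  · let ρ : Fin n ↪o (Fin (n + 6))ᵒᵈ := ι.trans Fin.revOrderIso.symm.toOrderEmbedding
    refine ⟨t, g ∘ OrderDual.ofDual ∘ ρ,
      g.injective.comp (OrderDual.ofDual.injective.comp ρ.injective), ?_⟩
    simpa only [Function.comp_assoc, ← Sym2.map_comp] using ht.comp_strictMono ρ.strictMono

theorem canonK_label_of_lt {n : ℕ} {a b : Fin n} (hab : a < b) :
    (canonK t n).label s(a, b) =
      ![n * ((a : ℕ) + 1) + ((b : ℕ) + 1),
        n * ((b : ℕ) + 1) + ((a : ℕ) + 1),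
        n * ((a : ℕ) + 1) - ((b : ℕ) + 1),
        n * ((b : ℕ) + 1) - ((a : ℕ) + 1)] t := by
  simp [canonK, symLabel, hab.le]

theorem canonK_isCanonical (t : Fin 4) (n : ℕ) :
    IsCanonical (V := Fin n) t (canonK t n).label := by
  intro a b c d hab hcd h
  have hrow {i j : Fin n} (hij : i < j) : n * ((i : ℕ) + 1) + n ≤ n * ((j : ℕ) + 1) :=
    Nat.mul_le_mul_left n (Nat.succ_le_succ hij)
  -- In particular, the subtractions in the labels do not truncate.
  have hbase (i : Fin n) : n ≤ n * ((i : ℕ) + 1) := Nat.le_mul_of_pos_right n i.val.succ_pos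
  refine (canonK_label_of_lt hab).trans_lt (lt_of_lt_of_eq ?_ (canonK_label_of_lt hcd).symm)
  fin_cases t
  · change n * ((a : ℕ) + 1) + (b + 1) < n * ((c : ℕ) + 1) + (d + 1)
    rcases h with hac | ⟨rfl, hbd⟩
    · have := hrow hac
      omega
    · omega
  · change n * ((b : ℕ) + 1) + (a + 1) < n * ((d : ℕ) + 1) + (c + 1)
    rcases h with hbd | ⟨rfl, hac⟩
    · have := hrow hbd
      omega
    · omega
  · change n * ((a : ℕ) + 1) - (b + 1) < n * ((c : ℕ) + 1) - (d + 1)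
    rcases h with hac | ⟨rfl, hdb⟩
    · have := hrow hac
      have := hbase a
      omega
    · have := hbase a
      omega
  · change n * ((b : ℕ) + 1) - (a + 1) < n * ((d : ℕ) + 1) - (c + 1)
    rcases h with hbd | ⟨rfl, hca⟩
    · have := hrow hbd
      have := hbase b
      omega
    · have := hbase b
      omega

theorem canonK_valid (t : Fin 4) (n : ℕ) : (canonK t n).Valid :=
  fun _ he _ hf =>
    (canonK_isCanonical t n).injOn (SimpleGraph.not_isDiag_of_mem_edgeSet _ he)
      (SimpleGraph.not_isDiag_of_mem_edgeSet _ hf)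

end Canonical

namespace EOGraph

theorem Contains.trans {G H K : EOGraph} (hGH : G.Contains H) (hHK : H.Contains K) :
    G.Contains K := by
  obtain ⟨f, hf_adj, hf_lt⟩ := hGH
  obtain ⟨g, hg_adj, hg_lt⟩ := hHK
  exact ⟨g.trans f, fun a b h => hf_adj _ _ (hg_adj a b h), fun a b c d hab hcd =>
    (hg_lt a b c d hab hcd).trans (hf_lt _ _ _ _ (hg_adj a b hab) (hg_adj c d hcd))⟩

theorem contains_canonK {G : EOGraph} {t : Fin 4} {n : ℕ} {f : Fin n ↪ Fin G.nv}
    (hadj : ∀ a b, a ≠ b → G.graph.Adj (f a) (f b))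
    (hf : IsCanonical t (G.label ∘ Sym2.map f)) : G.Contains (canonK t n) :=
  ⟨f, fun a b hab => hadj a b hab.ne, fun _ _ _ _ hab hcd =>
    (canonK_isCanonical t n).lt_iff_lt hf (mt Sym2.mk_isDiag_iff.mp hab.ne)
      (mt Sym2.mk_isDiag_iff.mp hcd.ne)⟩

theorem canonK_contains_canonK {m n : ℕ} (t : Fin 4) (hnm : n ≤ m) :
    (canonK t m).Contains (canonK t n) :=
  contains_canonK (f := Fin.castLEEmb hnm) (fun _ _ => (Fin.castLEEmb hnm).injective.ne)
    ((canonK_isCanonical t m).comp_strictMono (Fin.strictMono_castLE hnm))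

end EOGraph

theorem exists_canonK_avoidsFam_of_canAvoid {F : Set EOGraph}
    (hF : ∀ N, CanAvoid (⊤ : SimpleGraph (Fin N)) F) :
    ∃ t, ∀ n, (canonK t n).AvoidsFam F := by
  by_contra! hcon
  simp only [EOGraph.AvoidsFam, EOGraph.Avoids, not_forall, not_not] at hcon
  choose n H hH hcontains using hcon
  obtain ⟨N, hN⟩ := exists_nat_forall_exists_isCanonical (Λ := ℕ) (Finset.univ.sup n)
  obtain ⟨L, hvalid, havoids⟩ := hF N
  obtain ⟨t, f, hinj, hf⟩ := hN L fun e he e' he' =>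
    hvalid e (by simpa using he) e' (by simpa using he')
  have hcanon : (EOGraph.mk N ⊤ L).Contains (canonK t (Finset.univ.sup n)) :=
    EOGraph.contains_canonK (f := ⟨f, hinj⟩) (fun _ _ => hinj.ne) hf
  have hle : n t ≤ Finset.univ.sup n := Finset.le_sup (Finset.mem_univ t)
  exact havoids (H t) (hH t)
    ((hcanon.trans (EOGraph.canonK_contains_canonK t hle)).trans (hcontains t))

theorem CanAvoid.anti {n : ℕ} {G G' : SimpleGraph (Fin n)} {F : Set EOGraph} (hle : G ≤ G') :
    CanAvoid G' F → CanAvoid G F := by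
  rintro ⟨L, hvalid, havoids⟩
  have hedge : G.edgeSet ⊆ G'.edgeSet := SimpleGraph.edgeSet_mono hle
  exact ⟨L, fun e he f hf => hvalid e (hedge he) f (hedge hf), fun H hH ⟨f, hadj, hlt⟩ =>
    havoids H hH ⟨f, fun a b hab => hle (hadj a b hab), hlt⟩⟩

theorem orderChrom_eq_top_iff {F : Set EOGraph} :
    orderChrom F = ⊤ ↔ ∀ n, CanAvoid (⊤ : SimpleGraph (Fin n)) F := by
  have chromaticNumber_ne_top {n : ℕ} (G : SimpleGraph (Fin n)) : G.chromaticNumber ≠ ⊤ :=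
    SimpleGraph.chromaticNumber_ne_top_iff_exists.mpr ⟨_, G.colorable_of_fintype⟩
  simp only [orderChrom, iInf_eq_top, chromaticNumber_ne_top, imp_false, not_not]
  exact ⟨fun h n => h n ⊤, fun h n G => (h n).anti le_top⟩

/-- The order chromatic number of a family `F` of edge-ordered graphs
is infinite if and only if one of the four canonical edge-orders of `K_n` avoids `F`
for all `n`. -/
theorem orderChrom_eq_top_iff_canonical (F : Set EOGraph)
    (hval : ∀ H ∈ F, H.Valid) (hne : ∀ H ∈ F, H.graph.edgeSet.Nonempty) :
    orderChrom F = ⊤ ↔ ∃ t : Fin 4, ∀ n : ℕ, (canonK t n).AvoidsFam F := by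
  rw [orderChrom_eq_top_iff]
  exact ⟨exists_canonK_avoidsFam_of_canAvoid, fun ⟨t, ht⟩ n =>
    ⟨(canonK t n).label, canonK_valid t n, ht n⟩⟩
end

section
/- For any k ≥ 2 and any family 𝓗 of edge-ordered graphs, the order chromatic number satisfies χ'_<(𝓗) > k if and only if for every n ≥ 3 there exists a canonical edge-order of the complete k-partite graph K_{k×n} (with n vertices in each class) that avoids 𝓗. -/
/-- The complete `k`-partite graph `K_{k×n}` on vertex set `Fin (k*n)`: the class of a
vertex `v` is `v / n` and its index within the class is `v % n`; two vertices are
adjacent iff they lie in different classes. -/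
def multiK (k n : ℕ) : SimpleGraph (Fin (k * n)) :=
  SimpleGraph.fromRel fun a b => (a : ℕ) / n ≠ (b : ℕ) / n

/-- `key n b j` is `j` or the order-reversal `n - 1 - j`, used to encode the `±` signs
in the canonical labelings. -/
def key (n : ℕ) (b : Bool) (j : ℕ) : ℕ := if b then j else n - 1 - j

/-- The edge-order given by `L` is canonical on the part of `K_{k×n}` between classes
`c1` and `c2`: for one of the two choices `(p, q)` of primary/secondary class and some
signs `b1 b2`, edges are ordered as by one of the eight labelings `±n·j1 ± j2`,
`±n·j2 ± j1`. -/
def PartCanonical (k n : ℕ) (L : Sym2 (Fin (k * n)) → ℕ) (c1 c2 : ℕ) : Prop :=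
  ∃ p q : ℕ, ((p, q) = (c1, c2) ∨ (p, q) = (c2, c1)) ∧ ∃ b1 b2 : Bool,
    ∀ u v u' v' : Fin (k * n),
      (u : ℕ) / n = p → (v : ℕ) / n = q → (u' : ℕ) / n = p → (v' : ℕ) / n = q →
      (L s(u, v) < L s(u', v') ↔
        n * key n b1 ((u : ℕ) % n) + key n b2 ((v : ℕ) % n) <
        n * key n b1 ((u' : ℕ) % n) + key n b2 ((v' : ℕ) % n))

/-- The part of `K_{k×n}` between classes `c1, c2` precedes the part between classes
`d1, d2` in the edge-order `L`: every edge of the former is smaller than every edge of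
the latter. -/
def PartPrecedes (k n : ℕ) (L : Sym2 (Fin (k * n)) → ℕ) (c1 c2 d1 d2 : ℕ) : Prop :=
  ∀ u v u' v' : Fin (k * n),
    (u : ℕ) / n = c1 → (v : ℕ) / n = c2 → (u' : ℕ) / n = d1 → (v' : ℕ) / n = d2 →
    L s(u, v) < L s(u', v')

/-- The parts of `K_{k×n}` between classes `c, c2` and between classes `c, c4` (sharing
the class `c`) are interleaved in the edge-order `L`: the relative order of an edge of
the first part and an edge of the second part is decided by comparing the indices of
their endpoints in the shared class, in one of the four possible ways. -/
def PartsInterleaved (k n : ℕ) (L : Sym2 (Fin (k * n)) → ℕ) (c c2 c4 : ℕ) : Prop :=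
  ∃ m : Fin 4,
    ∀ u v u' v' : Fin (k * n),
      (u : ℕ) / n = c → (v : ℕ) / n = c2 → (u' : ℕ) / n = c → (v' : ℕ) / n = c4 →
      (L s(u, v) < L s(u', v') ↔
        ![(u : ℕ) % n < (u' : ℕ) % n, (u : ℕ) % n ≤ (u' : ℕ) % n,
          (u' : ℕ) % n < (u : ℕ) % n, (u' : ℕ) % n ≤ (u : ℕ) % n] m)

/-- `L` is a canonical edge-order of `K_{k×n}`: it induces a canonical edge-ordering on
every part and for every two distinct parts, either one precedes the other or they are
interleaved (the latter only possible for parts sharing a class). -/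
def CanonicalMulti (k n : ℕ) (L : Sym2 (Fin (k * n)) → ℕ) : Prop :=
  (∀ c1 c2 : ℕ, c1 < c2 → c2 < k → PartCanonical k n L c1 c2) ∧
  (∀ c1 c2 d1 d2 : ℕ, c1 < c2 → c2 < k → d1 < d2 → d2 < k → (c1, c2) ≠ (d1, d2) →
    PartPrecedes k n L c1 c2 d1 d2 ∨ PartPrecedes k n L d1 d2 c1 c2 ∨
    (∃ s e1 e2 : ℕ, ({c1, c2} : Set ℕ) = {s, e1} ∧ ({d1, d2} : Set ℕ) = {s, e2} ∧
      PartsInterleaved k n L s e1 e2))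

/-!
If `χ'_<(F) > k`, every `K_{k×N}` has an edge-order avoiding `F`. Record for each `N` how the edges
of such an order compare, as a function of the classes and indices of their four endpoints. A
pointwise limit along an ultrafilter in `N` followed by Ramsey's theorem for 4-tuples of indices
yields avoiding orders of every `K_{k×n}` in which the comparison of two edges depends only on the
classes of the endpoints and the relative order of those sharing a class.

Such an order is canonical. On one part it is an array whose rows and columns are monotone; after
reversing indices they are increasing, and the common outcome of comparing `(i, j)` with `(i', j')`
for `i < i'`, `j' < j` decides which of the two lexicographic orders it is. For two parts sharing a
class only the outcomes for `i < i'`, `i = i'`, `i' < i` in that class matter; if the outer two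
agree, a cyclic chain of inequalities forces the middle one to agree as well.

Conversely, a `k`-colourable graph on `m` vertices is a subgraph of `K_{k×m}` and inherits any
edge-order avoiding `F`.
-/

section Ramsey

open Filter

theorem exists_frequently_eqOn_of_finite {X κ : Type*} [Finite κ] (R : ℕ → X → κ) :
    ∃ P : X → κ, ∀ S : Set X, S.Finite → ∃ᶠ N in atTop, Set.EqOn (R N) P S := by
  have hconst (x : X) : ∃ a, ∀ᶠ N in (hyperfilter ℕ : Filter ℕ), R N x = a := by
    obtain ⟨a, ha⟩ := ((hyperfilter ℕ).map (R · x)).eq_pure_of_finite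
    exact ⟨a, Ultrafilter.mem_map.1 (ha ▸ Ultrafilter.mem_pure.2 rfl : {a} ∈ _)⟩
  choose P hP using hconst
  refine ⟨P, fun S hS => Frequently.filter_mono ?_ Nat.hyperfilter_le_atTop⟩
  exact ((eventually_all_finite hS).2 fun x _ => hP x).frequently

theorem exists_strictMono_eq_comp_init {κ : Type*} [Finite κ] {m : ℕ}
    (c : (Fin (m + 1) → ℕ) → κ) :
    ∃ (c' : (Fin m → ℕ) → κ) (f : ℕ → ℕ), StrictMono f ∧
      ∀ x : Fin (m + 1) → ℕ, StrictMono x → c (f ∘ x) = c' (Fin.init (f ∘ x)) := by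
  obtain ⟨c', hc'⟩ := exists_frequently_eqOn_of_finite fun y s => c (Fin.snoc s y)
  have hnext (B : ℕ) : ∃ y, B < y ∧ ∀ s ≤ fun _ => B, c (Fin.snoc s y) = c' s := by
    obtain ⟨y, hy, hB⟩ := ((hc' _ (Set.finite_Iic fun _ => B)).and_eventually
      (eventually_gt_atTop B)).exists
    exact ⟨y, hB, hy⟩
  choose next lt_next hnext using hnext
  let g (i : ℕ) : ℕ := next^[i] 0
  have hg_succ (i : ℕ) : g (i + 1) = next (g i) := Function.iterate_succ_apply' ..
  have hg : StrictMono g := strictMono_nat_of_lt_succ fun i => hg_succ i ▸ lt_next _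
  refine ⟨c', fun i => g (i + 1), fun i j hij => hg (Nat.succ_lt_succ hij), fun x hx => ?_⟩
  have hbound : Fin.init ((fun i => g (i + 1)) ∘ x) ≤ fun _ => g (x (Fin.last m)) :=
    fun i => hg.monotone (hx i.castSucc_lt_last)
  rw [← hnext _ _ hbound, ← hg_succ]
  exact congrArg c (Fin.snoc_init_self _).symm

/-- The infinite Ramsey theorem, with `m`-subsets of `ℕ` encoded as increasing `m`-tuples. -/
theorem exists_strictMono_forall_comp_eq {κ : Type*} [Finite κ] {m : ℕ} (c : (Fin m → ℕ) → κ) :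
    ∃ f : ℕ → ℕ, StrictMono f ∧
      ∃ a, ∀ x : Fin m → ℕ, StrictMono x → c (f ∘ x) = a := by
  induction m with
  | zero => exact ⟨id, strictMono_id, c default, fun x _ => congrArg c (Subsingleton.elim _ _)⟩
  | succ m ih =>
    obtain ⟨c', f, hf, hc⟩ := exists_strictMono_eq_comp_init c
    obtain ⟨g, hg, a, ha⟩ := ih fun s => c' (f ∘ s)
    refine ⟨f ∘ g, hf.comp hg, a, fun x hx => ?_⟩
    rw [Function.comp_assoc, hc _ (hg.comp hx)]
    exact ha _ (hx.comp Fin.strictMono_castSucc)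

/-- The rank of `j a` in the set of values of `j`; ties share a rank and no rank is skipped. -/
def valueRank {ι α : Type*} [Fintype ι] [LinearOrder α] (j : ι → α) (a : ι) : ℕ :=
  (({b | j b < j a} : Finset ι).image j).card

section ValueRank

variable {ι α β : Type*} [Fintype ι] [LinearOrder α] [LinearOrder β]

theorem valueRank_lt_card (j : ι → α) (a : ι) : valueRank j a < Fintype.card ι :=
  Finset.card_image_le.trans_lt <| Finset.card_lt_univ_of_notMem (x := a) (by simp)

theorem valueRank_le_of_lt_iff_lt {j : ι → α} {j' : ι → β}
    (h : ∀ a b, j a < j b ↔ j' a < j' b) (a : ι) : valueRank j' a ≤ valueRank j a := by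
  have hj : j'.FactorsThrough j := fun b c hbc => by
    apply le_antisymm <;> rw [← not_lt, ← h, hbc] <;> exact lt_irrefl _
  have himage (s : Finset ι) :
      s.image j' = (s.image j).image (Function.extend j j' fun _ => j' a) := by
    rw [Finset.image_image]
    exact Finset.image_congr fun b _ => (hj.extend_apply _ b).symm
  simp only [valueRank, ← h, himage]
  exact Finset.card_image_le

theorem valueRank_congr {j : ι → α} {j' : ι → β} (h : ∀ a b, j a < j b ↔ j' a < j' b) :
    valueRank j = valueRank j' :=
  funext fun a => (valueRank_le_of_lt_iff_lt (fun a b => (h a b).symm) a).antisymm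
    (valueRank_le_of_lt_iff_lt h a)

theorem exists_strictMono_apply_valueRank (j : ι → ℕ) :
    ∃ x : ℕ → ℕ, StrictMono x ∧ ∀ a, x (valueRank j a) = j a := by
  classical
  -- Adding all large numbers to the values of `j` makes them infinite without changing their ranks.
  let p (v : ℕ) : Prop := v ∈ Set.range j ∨ ∀ b, j b < v
  have hp : Set.Infinite {v | p v} := by
    obtain ⟨B, hB⟩ := Finite.bddAbove_range j
    refine (Set.Ioi_infinite B).mono fun v hv => Or.inr fun b => ?_
    exact (hB ⟨b, rfl⟩).trans_lt hv
  have hcount (a : ι) : valueRank j a = Nat.count p (j a) := by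
    rw [Nat.count_eq_card_filter_range, valueRank]
    congr 1
    ext v
    simp only [Finset.mem_image, Finset.mem_filter, Finset.mem_univ, true_and, Finset.mem_range, p]
    grind
  exact ⟨Nat.nth p, Nat.nth_strictMono hp, fun a => by
    rw [hcount, Nat.nth_count (Or.inl ⟨a, rfl⟩)]⟩

end ValueRank

theorem exists_strictMono_comp_eq_of_lt_iff_lt {κ : Type*} [Finite κ] {m : ℕ}
    (c : (Fin m → ℕ) → κ) :
    ∃ f : ℕ → ℕ, StrictMono f ∧ ∀ j j' : Fin m → ℕ, (∀ a b, j a < j b ↔ j' a < j' b) →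
      c (f ∘ j) = c (f ∘ j') := by
  -- Colouring `x` by all patterns `x ∘ t` at once covers the tuples with repeated entries.
  obtain ⟨f, hf, d, hd⟩ :=
    exists_strictMono_forall_comp_eq fun x => fun t : Fin m → Fin m => c (x ∘ t)
  have hrank (j : Fin m → ℕ) : c (f ∘ j) =
      d fun a => ⟨valueRank j a, by simpa using valueRank_lt_card j a⟩ := by
    obtain ⟨x, hx, hxj⟩ := exists_strictMono_apply_valueRank j
    rw [← hd (x ∘ Fin.val) (hx.comp Fin.val_strictMono)]
    exact congrArg c (funext fun a => congrArg f (hxj a).symm)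
  refine ⟨f, hf, fun j j' h => ?_⟩
  simp only [hrank, valueRank_congr h]

end Ramsey

section Array

variable {α β γ : Type*} [LinearOrder α] [LinearOrder β] [LinearOrder γ]

theorem forall_lt_or_forall_gt_of_iff {ι : Type*} {f g : ι → γ} (hne : ∀ q, f q ≠ g q)
    (hiff : ∀ q r, f q < g q ↔ f r < g r) : (∀ q, f q < g q) ∨ ∀ q, g q < f q := by
  by_cases h : ∃ q, f q < g q
  · obtain ⟨q, hq⟩ := h
    exact Or.inl fun r => (hiff q r).1 hq
  · exact Or.inr fun q => (hne q).lt_or_gt.resolve_left (not_exists.1 h q)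

/-- The order of two entries of the array `A` depends only on the relative order of their row
indices and that of their column indices. -/
def CmpInvariant (A : α → β → γ) : Prop :=
  ∀ ⦃i i' x x' : α⦄ ⦃j j' y y' : β⦄, cmp i i' = cmp x x' → cmp j j' = cmp y y' →
    (A i j < A i' j' ↔ A x y < A x' y')

namespace CmpInvariant

variable {A : α → β → γ}

theorem flip (hA : CmpInvariant A) : CmpInvariant (flip A) :=
  fun _ _ _ _ _ _ _ _ hj hi => hA hi hj

theorem strictMono_or_strictAnti (hA : CmpInvariant A) (hinj : A.Injective2) :
    (∀ j, StrictMono (A · j)) ∨ ∀ j, StrictAnti (A · j) := by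
  let Q := {q : α × α × β // q.1 < q.2.1}
  have := forall_lt_or_forall_gt_of_iff (f := fun q : Q => A q.1.1 q.1.2.2)
    (g := fun q : Q => A q.1.2.1 q.1.2.2) (fun q h => q.2.ne (hinj h).1)
    fun q r => hA (q.2.cmp_eq_lt.trans r.2.cmp_eq_lt.symm) (by simp)
  exact this.imp (fun h j i i' hi => h ⟨(i, i', j), hi⟩) fun h j i i' hi => h ⟨(i, i', j), hi⟩

theorem cross_lt_or_cross_gt (hA : CmpInvariant A) (hinj : A.Injective2) :
    (∀ ⦃i i' j j'⦄, i < i' → j' < j → A i j < A i' j') ∨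
      ∀ ⦃i i' j j'⦄, i < i' → j' < j → A i' j' < A i j := by
  let Q := {q : (α × β) × α × β // q.1.1 < q.2.1 ∧ q.2.2 < q.1.2}
  have := forall_lt_or_forall_gt_of_iff (f := fun q : Q => A q.1.1.1 q.1.1.2)
    (g := fun q : Q => A q.1.2.1 q.1.2.2) (fun q h => q.2.1.ne (hinj h).1)
    fun q r => hA (q.2.1.cmp_eq_lt.trans r.2.1.cmp_eq_lt.symm)
      (q.2.2.cmp_eq_gt.trans r.2.2.cmp_eq_gt.symm)
  exact this.imp (fun h i i' j j' hi hj => h ⟨((i, j), i', j'), hi, hj⟩)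
    fun h i i' j j' hi hj => h ⟨((i, j), i', j'), hi, hj⟩

end CmpInvariant

theorem lt_iff_toLex_lt_of_cross_lt {A : α → β → γ} (hrow : ∀ j, StrictMono (A · j))
    (hcol : ∀ i, StrictMono (A i)) (hcross : ∀ ⦃i i' j j'⦄, i < i' → j' < j → A i j < A i' j')
    (i i' : α) (j j' : β) : A i j < A i' j' ↔ toLex (i, j) < toLex (i', j') := by
  have hmono : StrictMono fun q : α ×ₗ β => A (ofLex q).1 (ofLex q).2 := fun q r hqr => by
    rcases Prod.Lex.lt_iff.1 hqr with hi | ⟨hi, hj⟩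
    · rcases le_or_gt (ofLex q).2 (ofLex r).2 with hj | hj
      · exact (hrow _ hi).trans_le ((hcol _).monotone hj)
      · exact hcross hi hj
    · simpa only [hi] using hcol _ hj
  exact hmono.lt_iff_lt (a := toLex (i, j)) (b := toLex (i', j'))

theorem CmpInvariant.lt_iff_toLex_lt_or {A : α → β → γ} (hA : CmpInvariant A)
    (hinj : A.Injective2) (hrow : ∀ j, StrictMono (A · j)) (hcol : ∀ i, StrictMono (A i)) :
    (∀ i i' j j', A i j < A i' j' ↔ toLex (i, j) < toLex (i', j')) ∨
      ∀ i i' j j', A i j < A i' j' ↔ toLex (j, i) < toLex (j', i') :=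
  (hA.cross_lt_or_cross_gt hinj).imp (lt_iff_toLex_lt_of_cross_lt hrow hcol) fun hcross i i' j j' =>
    lt_iff_toLex_lt_of_cross_lt (A := _root_.flip A) hcol hrow
      (fun _ _ _ _ hj hi => hcross hi hj) j j' i i'

variable {n : ℕ}

/-- The reindexing of `Fin n` whose underlying map on values is `key n b`. -/
def keyPerm (b : Bool) : Equiv.Perm (Fin n) := if b then 1 else Fin.revPerm

theorem val_keyPerm (b : Bool) (i : Fin n) : (keyPerm b i : ℕ) = key n b i := by
  cases b
  · simp [keyPerm, key, Fin.val_rev]; omega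
  · rfl

theorem keyPerm_keyPerm (b : Bool) (i : Fin n) : keyPerm b (keyPerm b i) = i := by
  cases b <;> simp [keyPerm]

theorem cmp_keyPerm_eq_cmp_keyPerm (b : Bool) {i i' x x' : Fin n} (h : cmp i i' = cmp x x') :
    cmp (keyPerm b i) (keyPerm b i') = cmp (keyPerm b x) (keyPerm b x') := by
  cases b
  · have hrev (y y' : Fin n) : cmp y.rev y'.rev = cmp y' y := by
      simp [cmp, cmpUsing]
    simpa [keyPerm, hrev] using cmp_eq_cmp_symm.1 h
  · exact h

theorem CmpInvariant.comp_keyPerm {p : ℕ} {A : Fin n → Fin p → γ} (hA : CmpInvariant A)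
    (b₁ b₂ : Bool) : CmpInvariant fun i j => A (keyPerm b₁ i) (keyPerm b₂ j) :=
  fun _ _ _ _ _ _ _ _ hi hj =>
    hA (cmp_keyPerm_eq_cmp_keyPerm b₁ hi) (cmp_keyPerm_eq_cmp_keyPerm b₂ hj)

theorem CmpInvariant.exists_strictMono_comp_keyPerm {A : Fin n → β → γ} (hA : CmpInvariant A)
    (hinj : A.Injective2) : ∃ b, ∀ j, StrictMono fun i => A (keyPerm b i) j := by
  rcases hA.strictMono_or_strictAnti hinj with h | h
  · exact ⟨true, h⟩
  · exact ⟨false, fun j => (h j).comp Fin.rev_strictAnti⟩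

theorem CmpInvariant.exists_keyPerm_lt_iff_toLex_lt {p : ℕ} {A : Fin n → Fin p → γ}
    (hA : CmpInvariant A) (hinj : A.Injective2) : ∃ b₁ b₂ : Bool,
    (∀ i i' j j', A i j < A i' j' ↔
      toLex (keyPerm b₁ i, keyPerm b₂ j) < toLex (keyPerm b₁ i', keyPerm b₂ j')) ∨
    ∀ i i' j j', A i j < A i' j' ↔
      toLex (keyPerm b₂ j, keyPerm b₁ i) < toLex (keyPerm b₂ j', keyPerm b₁ i') := by
  obtain ⟨b₁, hrow⟩ := hA.exists_strictMono_comp_keyPerm hinj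
  obtain ⟨b₂, hcol⟩ := hA.flip.exists_strictMono_comp_keyPerm fun _ _ _ _ h => (hinj h).symm
  refine ⟨b₁, b₂, ?_⟩
  have := (hA.comp_keyPerm b₁ b₂).lt_iff_toLex_lt_or
    (fun _ _ _ _ h => by simpa using hinj h) (fun j => hrow _) fun i => hcol _
  refine this.imp (fun h i i' j j' => ?_) fun h i i' j j' => ?_ <;>
  simpa only [keyPerm_keyPerm] using
    h (keyPerm b₁ i) (keyPerm b₁ i') (keyPerm b₂ j) (keyPerm b₂ j')

section SharedRows

variable {δ δ' : Type*} {A : α → δ → γ} {B : α → δ' → γ}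

theorem forall_lt_or_forall_gt_of_cmp_eq (hne : ∀ i j i' j', A i j ≠ B i' j')
    (hiff : ∀ ⦃i i' x x'⦄ j j' y y', cmp i i' = cmp x x' → (A i j < B i' j' ↔ A x y < B x' y'))
    (o : Ordering) :
    (∀ i j i' j', cmp i i' = o → A i j < B i' j') ∨
      ∀ i j i' j', cmp i i' = o → B i' j' < A i j := by
  let Q := {q : (α × δ) × α × δ' // cmp q.1.1 q.2.1 = o}
  have := forall_lt_or_forall_gt_of_iff (f := fun q : Q => A q.1.1.1 q.1.1.2)
    (g := fun q : Q => B q.1.2.1 q.1.2.2) (fun q => hne _ _ _ _)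
    fun q r => hiff _ _ _ _ (q.2.trans r.2.symm)
  exact this.imp (fun h i j i' j' hi => h ⟨((i, j), i', j'), hi⟩)
    fun h i j i' j' hi => h ⟨((i, j), i', j'), hi⟩

theorem forall_lt_of_forall_ne_lt {ι : Type*} [Nontrivial ι] [Nonempty δ] [Nonempty δ']
    {A : ι → δ → γ} {B : ι → δ' → γ} (hne : ∀ i j i' j', i ≠ i' → A i j < B i' j')
    (heq : (∀ i j i' j', i = i' → A i j < B i' j') ∨ ∀ i j i' j', i = i' → B i' j' < A i j) :
    ∀ i j i' j', A i j < B i' j' := by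
  obtain ⟨i₀, i₁, hi⟩ := exists_pair_ne ι
  obtain ⟨j⟩ := ‹Nonempty δ›
  obtain ⟨j'⟩ := ‹Nonempty δ'›
  have heq : ∀ i j i' j', i = i' → A i j < B i' j' := by
    -- Otherwise `A i₀ j < B i₁ j' < A i₁ j < B i₀ j' < A i₀ j`.
    refine heq.resolve_right fun heq => lt_irrefl (A i₀ j) ?_
    exact (hne i₀ j i₁ j' hi).trans <| (heq i₁ j i₁ j' rfl).trans <|
      (hne i₁ j i₀ j' hi.symm).trans (heq i₀ j i₀ j' rfl)
  intro i j i' j'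
  exact (eq_or_ne i i').elim (heq i j i' j') (hne i j i' j')

theorem forall_lt_or_forall_gt_or_interleaved [Nontrivial α] [Nonempty δ] [Nonempty δ']
    (hne : ∀ i j i' j', A i j ≠ B i' j')
    (hiff : ∀ ⦃i i' x x'⦄ j j' y y', cmp i i' = cmp x x' → (A i j < B i' j' ↔ A x y < B x' y')) :
    (∀ i j i' j', A i j < B i' j') ∨ (∀ i' j' i j, B i' j' < A i j) ∨
      ∃ m : Fin 4, ∀ i j i' j', A i j < B i' j' ↔ ![i < i', i ≤ i', i' < i, i' ≤ i] m := by
  have hlt := forall_lt_or_forall_gt_of_cmp_eq hne hiff .lt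
  have heq := forall_lt_or_forall_gt_of_cmp_eq hne hiff .eq
  have hgt := forall_lt_or_forall_gt_of_cmp_eq hne hiff .gt
  simp only [cmp_eq_lt_iff, cmp_eq_eq_iff, cmp_eq_gt_iff] at hlt heq hgt
  rcases hlt with hlt | hlt <;> rcases hgt with hgt | hgt
  · exact Or.inl <| forall_lt_of_forall_ne_lt
      (fun i j i' j' h => h.lt_or_gt.elim (hlt i j i' j') (hgt i j i' j')) heq
  · refine Or.inr (Or.inr ?_)
    rcases heq with heq | heq
    · exact ⟨1, fun i j i' j' => ⟨fun h => not_lt.1 fun hi => (hgt i j i' j' hi).asymm h,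
        fun h => h.lt_or_eq.elim (hlt i j i' j') (heq i j i' j')⟩⟩
    · exact ⟨0, fun i j i' j' => ⟨fun h => not_le.1 fun hi =>
        (hi.lt_or_eq'.elim (hgt i j i' j') (heq i j i' j')).asymm h, hlt i j i' j'⟩⟩
  · refine Or.inr (Or.inr ?_)
    rcases heq with heq | heq
    · exact ⟨3, fun i j i' j' => ⟨fun h => not_lt.1 fun hi => (hlt i j i' j' hi).asymm h,
        fun h => h.lt_or_eq'.elim (hgt i j i' j') (heq i j i' j')⟩⟩
    · exact ⟨2, fun i j i' j' => ⟨fun h => not_le.1 fun hi =>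
        (hi.lt_or_eq.elim (hlt i j i' j') (heq i j i' j')).asymm h, hgt i j i' j'⟩⟩
  · exact Or.inr <| Or.inl <| forall_lt_of_forall_ne_lt
      (fun i' j' i j h => h.lt_or_gt.elim (hgt i j i' j') (hlt i j i' j')) <|
      heq.symm.imp (fun h i' j' i j hi => h i j i' j' hi.symm)
        fun h i' j' i j hi => h i j i' j' hi.symm

end SharedRows

end Array

section Copies

theorem lt_orderChrom_iff {k : ℕ} {F : Set EOGraph} :
    (k : ℕ∞) < orderChrom F ↔
      ∀ (m : ℕ) (G : SimpleGraph (Fin m)), G.Colorable k → CanAvoid G F := by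
  rw [← ENat.natCast_add_one_le_iff, orderChrom]
  simp only [le_iInf_iff, ENat.natCast_add_one_le_iff]
  refine forall₂_congr fun m G => ?_
  rw [not_imp_comm, not_lt, SimpleGraph.chromaticNumber_le_iff_colorable]

variable {m N : ℕ} {G : SimpleGraph (Fin m)} {G' : SimpleGraph (Fin N)}
  {L : Sym2 (Fin N) → ℕ} {F : Set EOGraph}

theorem EOGraph.Valid.comap (hL : (EOGraph.mk N G' L).Valid) (φ : G.Copy G') :
    (EOGraph.mk m G (L ∘ Sym2.map φ)).Valid := by
  intro e he e' he' h
  refine Sym2.map.injective φ.injective (hL _ ?_ _ ?_ h)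
  exacts [φ.toHom.map_mem_edgeSet he, φ.toHom.map_mem_edgeSet he']

theorem EOGraph.AvoidsFam.comap (hL : (EOGraph.mk N G' L).AvoidsFam F) (φ : G.Copy G') :
    (EOGraph.mk m G (L ∘ Sym2.map φ)).AvoidsFam F := by
  rintro H hH ⟨f, hadj, hlt⟩
  exact hL H hH ⟨f.trans φ.toEmbedding, fun a b h => φ.toHom.map_adj (hadj a b h), hlt⟩

end Copies

section Vertices

variable {k n : ℕ}

/-- The vertex `v_{c,i}` of `K_{k×n}`, with classes and indices counted from `0`. -/
def vertex (c : Fin k) (i : Fin n) : Fin (k * n) := finProdFinEquiv (c, i)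

theorem val_vertex (c : Fin k) (i : Fin n) : (vertex c i : ℕ) = i + n * c := rfl

theorem divNat_vertex (c : Fin k) (i : Fin n) : (vertex c i).divNat = c :=
  congrArg Prod.fst (finProdFinEquiv.symm_apply_apply (c, i))

theorem vertex_mod (c : Fin k) (i : Fin n) : (vertex c i : ℕ) % n = i :=
  congrArg (fun q : Fin k × Fin n => (q.2 : ℕ)) (finProdFinEquiv.symm_apply_apply (c, i))

theorem exists_vertex_eq_of_div_eq {u : Fin (k * n)} {c : Fin k} (hu : (u : ℕ) / n = c) :
    ∃ i, vertex c i = u := by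
  obtain rfl : u.divNat = c := Fin.ext hu
  exact ⟨u.modNat, finProdFinEquiv.apply_symm_apply u⟩

theorem vertex_inj {c d : Fin k} {i j : Fin n} : vertex c i = vertex d j ↔ c = d ∧ i = j :=
  finProdFinEquiv.injective.eq_iff.trans Prod.mk_inj

theorem vertex_lt_vertex {c d : Fin k} {i j : Fin n} :
    vertex c i < vertex d j ↔ toLex (c, i) < toLex (d, j) := by
  have hmono : StrictMono fun q : Fin k ×ₗ Fin n => vertex (ofLex q).1 (ofLex q).2 := by
    intro q r hqr
    rcases Prod.Lex.lt_iff.1 hqr with hc | ⟨hc, hi⟩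
    · calc (ofLex q).2 + n * (ofLex q).1 < n * ((ofLex q).1 + 1) := by grind
        _ ≤ n * (ofLex r).1 := Nat.mul_le_mul_left n hc
        _ ≤ (ofLex r).2 + n * (ofLex r).1 := Nat.le_add_left ..
    · simpa only [Fin.lt_def, val_vertex, hc, Nat.add_lt_add_iff_right] using hi
  exact hmono.lt_iff_lt (a := toLex (c, i)) (b := toLex (d, j))

theorem vertex_lt_vertex_congr {c d : Fin k} {i j x y : Fin n}
    (h : c = d → cmp i j = cmp x y) : vertex c i < vertex d j ↔ vertex c x < vertex d y := by
  simp only [vertex_lt_vertex, Prod.Lex.toLex_lt_toLex]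
  exact or_congr_right (and_congr_right fun hcd => lt_iff_lt_of_cmp_eq_cmp (h hcd))

theorem multiK_adj {u v : Fin (k * n)} : (multiK k n).Adj u v ↔ u.divNat ≠ v.divNat := by
  simp only [multiK, SimpleGraph.fromRel_adj, ne_eq, Fin.ext_iff, Fin.coe_divNat]
  grind

theorem multiK_adj_vertex {c d : Fin k} {i j : Fin n} :
    (multiK k n).Adj (vertex c i) (vertex d j) ↔ c ≠ d := by
  simp only [multiK_adj, divNat_vertex]

/-- The copy of a `k`-coloured graph in `K_{k×n}` in which the colour classes lie in the classes
of `K_{k×n}` and the index of a vertex is its image under `g`. -/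
def multiKCopy {V : Type*} {G : SimpleGraph V} (C : G.Coloring (Fin k)) (g : V ↪ Fin n) :
    G.Copy (multiK k n) :=
  ⟨⟨fun u => vertex (C u) (g u), fun h => multiK_adj_vertex.2 (C.valid h)⟩,
    fun _ _ h => g.injective (vertex_inj.1 h).2⟩

/-- The colouring of `K_{k×n}` by its classes. -/
def multiKColoring (k n : ℕ) : (multiK k n).Coloring (Fin k) :=
  .mk Fin.divNat fun h => multiK_adj.1 h

end Vertices

section Homogeneous

variable {k n : ℕ} {L : Sym2 (Fin (k * n)) → ℕ}

/-- The order of two edges of `K_{k×n}` depends only on the classes of their four endpoints and on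
the relative order of those endpoints that share a class. -/
def OrderHomogeneous (L : Sym2 (Fin (k * n)) → ℕ) : Prop :=
  ∀ (c : Fin 4 → Fin k) (i x : Fin 4 → Fin n),
    (∀ a b, c a = c b → cmp (i a) (i b) = cmp (x a) (x b)) →
      (L s(vertex (c 0) (i 0), vertex (c 1) (i 1)) < L s(vertex (c 2) (i 2), vertex (c 3) (i 3)) ↔
        L s(vertex (c 0) (x 0), vertex (c 1) (x 1)) < L s(vertex (c 2) (x 2), vertex (c 3) (x 3)))

theorem exists_orderHomogeneous {F : Set EOGraph} (h : ∀ N, CanAvoid (multiK k N) F) (n : ℕ) :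
    ∃ L, (EOGraph.mk (k * n) (multiK k n) L).Valid ∧
      (EOGraph.mk (k * n) (multiK k n) L).AvoidsFam F ∧ OrderHomogeneous L := by
  choose L hvalid havoids using h
  let R (N : ℕ) (x : Fin 4 → ℕ) (c : Fin 4 → Fin k) : Prop := ∃ hx : ∀ a, x a < N,
    L N s(vertex (c 0) ⟨x 0, hx 0⟩, vertex (c 1) ⟨x 1, hx 1⟩) <
      L N s(vertex (c 2) ⟨x 2, hx 2⟩, vertex (c 3) ⟨x 3, hx 3⟩)
  obtain ⟨P, hP⟩ := exists_frequently_eqOn_of_finite R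
  obtain ⟨f, hf, hfP⟩ := exists_strictMono_comp_eq_of_lt_iff_lt P
  let pos (c : Fin 4 → Fin k) (i : Fin 4 → Fin n) (a : Fin 4) : ℕ := vertex (c a) (i a)
  have hfin : (Set.range fun q : (Fin 4 → Fin k) × (Fin 4 → Fin n) => f ∘ pos q.1 q.2).Finite :=
    Set.finite_range _
  obtain ⟨N, hRP, hN⟩ := ((hP _ hfin).and_eventually
    (Filter.eventually_ge_atTop (f (k * n)))).exists
  have hfN (u : Fin (k * n)) : f u < N := (hf u.2).trans_le hN
  let φ := multiKCopy (multiKColoring k n)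
    ⟨fun u => ⟨f u, hfN u⟩, fun u v huv => Fin.ext (hf.injective (Fin.mk.inj huv))⟩
  have hφ (c : Fin k) (i : Fin n) : φ (vertex c i) = vertex c ⟨f (vertex c i), hfN _⟩ :=
    congrArg (vertex · _) (divNat_vertex c i)
  refine ⟨L N ∘ Sym2.map φ, (hvalid N).comap φ, (havoids N).comap φ, fun c i x hix => ?_⟩
  have hlabel (i : Fin 4 → Fin n) :
      L N s(φ (vertex (c 0) (i 0)), φ (vertex (c 1) (i 1))) <
        L N s(φ (vertex (c 2) (i 2)), φ (vertex (c 3) (i 3))) ↔ P (f ∘ pos c i) c := by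
    rw [← hRP ⟨(c, i), rfl⟩]
    simp only [hφ, R]
    exact ⟨fun hlt => ⟨fun a => hfN _, hlt⟩, fun ⟨_, hlt⟩ => hlt⟩
  have hpos (a b : Fin 4) : pos c i a < pos c i b ↔ pos c x a < pos c x b :=
    vertex_lt_vertex_congr (hix a b)
  simp only [Function.comp_apply, Sym2.map_mk, hlabel, hfP _ _ hpos]

/-- The labels of the edges between the classes `c` and `d`, as an array. -/
def edgeLabel (L : Sym2 (Fin (k * n)) → ℕ) (c d : Fin k) (i j : Fin n) : ℕ :=
  L s(vertex c i, vertex d j)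

theorem flip_edgeLabel (c d : Fin k) : flip (edgeLabel L c d) = edgeLabel L d c := by
  funext j i
  exact congrArg L Sym2.eq_swap

theorem OrderHomogeneous.edgeLabel_lt_iff (hL : OrderHomogeneous L) {c d c' d' : Fin k}
    {i i' x x' j j' y y' : Fin n} (hcd : c ≠ d) (hcd₂ : c' ≠ d') (hcd' : c ≠ d') (hdc' : d ≠ c')
    (hi : c = c' → cmp i i' = cmp x x') (hj : d = d' → cmp j j' = cmp y y') :
    edgeLabel L c d i j < edgeLabel L c' d' i' j' ↔
      edgeLabel L c d x y < edgeLabel L c' d' x' y' := by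
  refine hL ![c, d, c', d'] ![i, j, i', j'] ![x, y, x', y'] ?_
  have hi' (h : c' = c) := cmp_eq_cmp_symm.1 (hi h.symm)
  have hj' (h : d' = d) := cmp_eq_cmp_symm.1 (hj h.symm)
  simpa [Fin.forall_fin_succ, hcd, hcd₂, hcd', hdc', hcd.symm, hcd₂.symm, hcd'.symm, hdc'.symm]
    using ⟨hi, hj, hi', hj'⟩

end Homogeneous

section Canonical

variable {k n : ℕ} {L : Sym2 (Fin (k * n)) → ℕ}

theorem EOGraph.Valid.eq_of_edgeLabel_eq (hval : (EOGraph.mk (k * n) (multiK k n) L).Valid)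
    {c d c' d' : Fin k} {i j i' j' : Fin n} (hcd : c ≠ d) (hcd₂ : c' ≠ d')
    (h : edgeLabel L c d i j = edgeLabel L c' d' i' j') :
    s((c, i), (d, j)) = s((c', i'), (d', j')) :=
  Sym2.map.injective finProdFinEquiv.injective <|
    hval _ (multiK_adj_vertex.2 hcd) _ (multiK_adj_vertex.2 hcd₂) h

theorem EOGraph.Valid.injective2_edgeLabel (hval : (EOGraph.mk (k * n) (multiK k n) L).Valid)
    {c d : Fin k} (hcd : c ≠ d) : (edgeLabel L c d).Injective2 := fun i i' j j' h => by
  have := hval.eq_of_edgeLabel_eq hcd hcd h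
  grind

theorem EOGraph.Valid.edgeLabel_ne_edgeLabel (hval : (EOGraph.mk (k * n) (multiK k n) L).Valid)
    {c d c' d' : Fin k} (hcd : c ≠ d) (hcd₂ : c' ≠ d') (hne : s(c, d) ≠ s(c', d'))
    (i j i' j' : Fin n) : edgeLabel L c d i j ≠ edgeLabel L c' d' i' j' := fun h =>
  hne (congrArg (Sym2.map Prod.fst) (hval.eq_of_edgeLabel_eq hcd hcd₂ h))

theorem forall_div_eq_of_forall_vertex {c d c' d' : Fin k}
    {p : Fin (k * n) → Fin (k * n) → Fin (k * n) → Fin (k * n) → Prop}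
    (h : ∀ i j i' j', p (vertex c i) (vertex d j) (vertex c' i') (vertex d' j'))
    (u v u' v' : Fin (k * n)) (hu : (u : ℕ) / n = c) (hv : (v : ℕ) / n = d)
    (hu' : (u' : ℕ) / n = c') (hv' : (v' : ℕ) / n = d') : p u v u' v' := by
  obtain ⟨i, rfl⟩ := exists_vertex_eq_of_div_eq hu
  obtain ⟨j, rfl⟩ := exists_vertex_eq_of_div_eq hv
  obtain ⟨i', rfl⟩ := exists_vertex_eq_of_div_eq hu'
  obtain ⟨j', rfl⟩ := exists_vertex_eq_of_div_eq hv'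
  exact h i j i' j'

theorem mul_key_add_key_lt_iff (b₁ b₂ : Bool) (i i' j j' : Fin n) :
    n * key n b₁ i + key n b₂ j < n * key n b₁ i' + key n b₂ j' ↔
      toLex (keyPerm b₁ i, keyPerm b₂ j) < toLex (keyPerm b₁ i', keyPerm b₂ j') := by
  simp only [← vertex_lt_vertex, Fin.lt_def, val_vertex, val_keyPerm, add_comm]

theorem label_lt_iff_key_lt {c d : Fin k} {b₁ b₂ : Bool}
    (h : ∀ i i' j j', edgeLabel L c d i j < edgeLabel L c d i' j' ↔
      toLex (keyPerm b₁ i, keyPerm b₂ j) < toLex (keyPerm b₁ i', keyPerm b₂ j')) :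
    ∀ u v u' v' : Fin (k * n), (u : ℕ) / n = c → (v : ℕ) / n = d → (u' : ℕ) / n = c →
      (v' : ℕ) / n = d → (L s(u, v) < L s(u', v') ↔
        n * key n b₁ (u % n) + key n b₂ (v % n) < n * key n b₁ (u' % n) + key n b₂ (v' % n)) := by
  refine forall_div_eq_of_forall_vertex fun i j i' j' => ?_
  simp only [vertex_mod, mul_key_add_key_lt_iff]
  exact h i i' j j'

theorem OrderHomogeneous.partCanonical (hL : OrderHomogeneous L)
    (hval : (EOGraph.mk (k * n) (multiK k n) L).Valid) {c d : Fin k} (hcd : c ≠ d) :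
    PartCanonical k n L c d := by
  have hinv : CmpInvariant (edgeLabel L c d) := fun _ _ _ _ _ _ _ _ hi hj =>
    hL.edgeLabel_lt_iff hcd hcd hcd hcd.symm (fun _ => hi) fun _ => hj
  obtain ⟨b₁, b₂, h | h⟩ := hinv.exists_keyPerm_lt_iff_toLex_lt (hval.injective2_edgeLabel hcd)
  · exact ⟨c, d, Or.inl rfl, b₁, b₂, label_lt_iff_key_lt h⟩
  · refine ⟨d, c, Or.inr rfl, b₂, b₁, label_lt_iff_key_lt fun j j' i i' => ?_⟩
    rw [← flip_edgeLabel c d]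
    exact h i i' j j'

theorem PartPrecedes.of_edgeLabel_lt {c d c' d' : Fin k}
    (h : ∀ i j i' j', edgeLabel L c d i j < edgeLabel L c' d' i' j') :
    PartPrecedes k n L c d c' d' :=
  forall_div_eq_of_forall_vertex h

theorem PartsInterleaved.of_edgeLabel_lt_iff {c d d' : Fin k} (h : ∃ m : Fin 4, ∀ i j i' j',
      edgeLabel L c d i j < edgeLabel L c d' i' j' ↔ ![i < i', i ≤ i', i' < i, i' ≤ i] m) :
    PartsInterleaved k n L c d d' := by
  obtain ⟨m, h⟩ := h
  refine ⟨m, forall_div_eq_of_forall_vertex fun i j i' j' => ?_⟩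
  simp only [vertex_mod]
  exact h i j i' j'

theorem PartPrecedes.swap_left {c d c' d' : ℕ} (h : PartPrecedes k n L c d c' d') :
    PartPrecedes k n L d c c' d' := fun u v u' v' hu hv hu' hv' =>
  Sym2.eq_swap (a := v) (b := u) ▸ h v u u' v' hv hu hu' hv'

theorem PartPrecedes.swap_right {c d c' d' : ℕ} (h : PartPrecedes k n L c d c' d') :
    PartPrecedes k n L c d d' c' := fun u v u' v' hu hv hu' hv' =>
  Sym2.eq_swap (a := v') (b := u') ▸ h u v v' u' hu hv hv' hu'

/-- The condition that `CanonicalMulti` imposes on two distinct parts: one precedes the other, or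
they share a class and are interleaved. -/
def PartsComparable (k n : ℕ) (L : Sym2 (Fin (k * n)) → ℕ) (c1 c2 d1 d2 : ℕ) : Prop :=
  PartPrecedes k n L c1 c2 d1 d2 ∨ PartPrecedes k n L d1 d2 c1 c2 ∨
    ∃ s e1 e2 : ℕ, ({c1, c2} : Set ℕ) = {s, e1} ∧ ({d1, d2} : Set ℕ) = {s, e2} ∧
      PartsInterleaved k n L s e1 e2

theorem PartsComparable.swap_left {c d c' d' : ℕ} (h : PartsComparable k n L c d c' d') :
    PartsComparable k n L d c c' d' := by
  rw [PartsComparable, Set.pair_comm d c]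
  exact h.imp .swap_left (.imp_left .swap_right)

theorem PartsComparable.swap_right {c d c' d' : ℕ} (h : PartsComparable k n L c d c' d') :
    PartsComparable k n L c d d' c' := by
  rw [PartsComparable, Set.pair_comm d' c']
  exact h.imp .swap_right (.imp_left .swap_left)

namespace OrderHomogeneous

theorem partsComparable_of_shared [Nontrivial (Fin n)] (hL : OrderHomogeneous L)
    (hval : (EOGraph.mk (k * n) (multiK k n) L).Valid) {c d d' : Fin k} (hcd : c ≠ d)
    (hcd' : c ≠ d') (hdd' : d ≠ d') : PartsComparable k n L c d c d' := by
  have := forall_lt_or_forall_gt_or_interleaved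
    (hval.edgeLabel_ne_edgeLabel hcd hcd' (by grind))
    fun _ _ _ _ _ _ _ _ hi =>
      hL.edgeLabel_lt_iff hcd hcd' hcd' hcd.symm (fun _ => hi) fun h => absurd h hdd'
  exact this.imp .of_edgeLabel_lt <| .imp .of_edgeLabel_lt fun h =>
    ⟨c, d, d', rfl, rfl, .of_edgeLabel_lt_iff h⟩

theorem partsComparable_of_disjoint (hL : OrderHomogeneous L)
    (hval : (EOGraph.mk (k * n) (multiK k n) L).Valid) {c d c' d' : Fin k} (hcd : c ≠ d)
    (hcd₂ : c' ≠ d') (hcc' : c ≠ c') (hcd' : c ≠ d') (hdc' : d ≠ c') (hdd' : d ≠ d') :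
    PartsComparable k n L c d c' d' := by
  have := forall_lt_or_forall_gt_of_iff
    (f := fun q : (Fin n × Fin n) × Fin n × Fin n => edgeLabel L c d q.1.1 q.1.2)
    (g := fun q => edgeLabel L c' d' q.2.1 q.2.2)
    (fun _ => hval.edgeLabel_ne_edgeLabel hcd hcd₂ (by grind) _ _ _ _)
    fun _ _ => hL.edgeLabel_lt_iff hcd hcd₂ hcd' hdc' (absurd · hcc') (absurd · hdd')
  exact this.imp (fun h => .of_edgeLabel_lt fun i j i' j' => h ((i, j), i', j'))
    fun h => .inl <| .of_edgeLabel_lt fun i' j' i j => h ((i, j), i', j')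

variable [Nontrivial (Fin n)]

theorem partsComparable (hL : OrderHomogeneous L)
    (hval : (EOGraph.mk (k * n) (multiK k n) L).Valid) {c d c' d' : Fin k} (hcd : c ≠ d)
    (hcd₂ : c' ≠ d') (hne : s(c, d) ≠ s(c', d')) : PartsComparable k n L c d c' d' := by
  by_cases hcc' : c = c'
  · subst hcc'
    exact hL.partsComparable_of_shared hval hcd hcd₂ (by grind)
  by_cases hcd' : c = d'
  · subst hcd'
    exact (hL.partsComparable_of_shared hval hcd hcd₂.symm (by grind)).swap_right
  by_cases hdc' : d = c'
  · subst hdc'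
    exact (hL.partsComparable_of_shared hval hcd.symm hcd₂ (by grind)).swap_left
  by_cases hdd' : d = d'
  · subst hdd'
    exact (hL.partsComparable_of_shared hval hcd.symm hcd₂.symm hcc').swap_left.swap_right
  · exact hL.partsComparable_of_disjoint hval hcd hcd₂ hcc' hcd' hdc' hdd'

theorem canonicalMulti (hL : OrderHomogeneous L)
    (hval : (EOGraph.mk (k * n) (multiK k n) L).Valid) : CanonicalMulti k n L := by
  refine ⟨fun c d hcd hd => ?_, fun c d c' d' hcd hd hcd₂ hd' hne => ?_⟩
  · lift d to Fin k using hd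
    lift c to Fin k using hcd.trans d.2
    exact hL.partCanonical hval (by grind)
  · lift d to Fin k using hd
    lift c to Fin k using hcd.trans d.2
    lift d' to Fin k using hd'
    lift c' to Fin k using hcd₂.trans d'.2
    exact hL.partsComparable hval (by grind) (by grind) (by grind)

end OrderHomogeneous

end Canonical

/-- For any `k ≥ 2` and any family `F` of edge-ordered graphs,
`χ'_<(F) > k` if and only if for every `n ≥ 3` some canonical edge-order of `K_{k×n}`
avoids `F`. -/
theorem orderChrom_gt_iff_canonicalMulti (k : ℕ) (hk : 2 ≤ k) (F : Set EOGraph)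
    (hval : ∀ H ∈ F, H.Valid) (hne : ∀ H ∈ F, H.graph.edgeSet.Nonempty) :
    (k : ℕ∞) < orderChrom F ↔
      ∀ n : ℕ, 3 ≤ n → ∃ L : Sym2 (Fin (k * n)) → ℕ,
        (EOGraph.mk (k * n) (multiK k n) L).Valid ∧ CanonicalMulti k n L ∧
        (EOGraph.mk (k * n) (multiK k n) L).AvoidsFam F := by
  rw [lt_orderChrom_iff]
  refine ⟨fun h n hn => ?_, fun h m G ⟨C⟩ => ?_⟩
  · have : Nontrivial (Fin n) := Fin.nontrivial_iff_two_le.2 (by omega)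
    obtain ⟨L, hvalid, havoids, hL⟩ :=
      exists_orderHomogeneous (fun N => h _ _ ⟨multiKColoring k N⟩) n
    exact ⟨L, hvalid, hL.canonicalMulti hvalid, havoids⟩
  · obtain ⟨L, hvalid, -, havoids⟩ := h (m + 3) (Nat.le_add_left 3 m)
    let φ := multiKCopy C (Fin.castAddEmb 3)
    exact ⟨L ∘ Sym2.map φ, hvalid.comap φ, havoids.comap φ⟩
end

section
/- The order chromatic numbers satisfy χ'_<(P_5^{1423}) = ∞ and χ'_<(P_5^{2314}) = ∞, but χ'_<({P_5^{1423}, P_5^{2314}}) = 3; that is, each of the two edge-ordered paths individually can be avoided by every finite simple graph, yet there is a finite simple graph of chromatic number 3 that cannot avoid the pair, and every bipartite graph can avoid the pair. -/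
/-- The edge-ordered path `P_5^{1423}` on vertices `a,b,c,d,e`:
edge-order `ab < cd < de < bc`. -/
def P5_1423 : EOGraph := pathEO 5 [1, 4, 2, 3]

/-- The edge-ordered path `P_5^{2314}` on vertices `a,b,c,d,e`:
edge-order `cd < ab < bc < de`. -/
def P5_2314 : EOGraph := pathEO 5 [2, 3, 1, 4]

/-!
Order the vertices and compare edges by their larger end first: this avoids `P_5^{1423}`, because
the larger end of the top edge `bc` would have to be the larger end of `cd` or of `de` too.
Reversing the orders of vertices and edges turns `P_5^{1423}` into `P_5^{2314}`, so comparing edges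
by their smaller end first avoids the latter. In a bipartite graph a single edge order does both:
the ends in one class are the larger ends for one vertex order and the smaller ends for another.

Conversely, suppose that an order of the edges of a complete tripartite graph with large classes
avoids `P_5^{1423}`. Inside any vertex set some end of the largest edge dominates all but at most
three vertices, meaning that each edge at it lies above all edges continuing that edge. Iterating
and applying the pigeonhole principle gives two dominating vertices in the same class, one of which
also dominates the other. Two vertices in each of the remaining two classes then produce a
`P_5^{2314}`.
-/

namespace EdgeOrderedPath

section Patterns

variable {V α : Type*} [LT α]

/-- The graph `G`, with edges ordered by `L`, contains `P_5^{1423}`. The labels may lie in any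
ordered type, which lets lexicographic and dual orders be used directly. -/
def HasPath1423 (G : SimpleGraph V) (L : Sym2 V → α) : Prop :=
  ∃ a b c d e, [a, b, c, d, e].Nodup ∧ G.Adj a b ∧ G.Adj b c ∧ G.Adj c d ∧ G.Adj d e ∧
    L s(a, b) < L s(c, d) ∧ L s(c, d) < L s(d, e) ∧ L s(d, e) < L s(b, c)

/-- The graph `G`, with edges ordered by `L`, contains `P_5^{2314}`. -/
def HasPath2314 (G : SimpleGraph V) (L : Sym2 V → α) : Prop :=
  ∃ a b c d e, [a, b, c, d, e].Nodup ∧ G.Adj a b ∧ G.Adj b c ∧ G.Adj c d ∧ G.Adj d e ∧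
    L s(c, d) < L s(a, b) ∧ L s(a, b) < L s(b, c) ∧ L s(b, c) < L s(d, e)

-- Reversing the path `abcde` and the order of its edges exchanges the two patterns.
theorem hasPath1423_toDual_comp_iff {G : SimpleGraph V} {L : Sym2 V → α} :
    HasPath1423 G (OrderDual.toDual ∘ L) ↔ HasPath2314 G L := by
  constructor
  all_goals
    rintro ⟨a, b, c, d, e, hnodup, hab, hbc, hcd, hde, h₁, h₂, h₃⟩
    refine ⟨e, d, c, b, a, List.nodup_reverse.mp hnodup, hde.symm, hcd.symm, hbc.symm, hab.symm, ?_⟩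
    simp only [Sym2.eq_swap (a := e) (b := d), Sym2.eq_swap (a := d) (b := c),
      Sym2.eq_swap (a := c) (b := b), Sym2.eq_swap (a := b) (b := a)]
    exact ⟨h₃, h₂, h₁⟩

end Patterns

section Containment

theorem pathEO_adj_iff {k : ℕ} {l : List ℕ} {a b : Fin (k + 1)} :
    (pathEO (k + 1) l).graph.Adj a b ↔ ∃ i : Fin k, s(a, b) = s(i.castSucc, i.succ) := by
  change (SimpleGraph.fromRel _).Adj a b ↔ _
  simp only [SimpleGraph.fromRel_adj, Sym2.eq_iff, Fin.ext_iff, Fin.val_castSucc, Fin.val_succ,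
    ne_eq]
  constructor
  · rintro ⟨-, h | h⟩
    · exact ⟨⟨a, by omega⟩, Or.inl ⟨rfl, h.symm⟩⟩
    · exact ⟨⟨b, by omega⟩, Or.inr ⟨h.symm, rfl⟩⟩
  · rintro ⟨i, h⟩
    omega

theorem pathEO_label_castSucc_succ {k : ℕ} {l : List ℕ} (i : Fin k) :
    (pathEO (k + 1) l).label s(i.castSucc, i.succ) = l.getD i 0 := by
  change l.getD (min i.castSucc i.succ : Fin (k + 1)) 0 = _
  rw [min_eq_left i.castSucc_lt_succ.le, Fin.val_castSucc]

theorem contains_pathEO_iff {n k : ℕ} {G : SimpleGraph (Fin n)} {L : Sym2 (Fin n) → ℕ}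
    {l : List ℕ} :
    (EOGraph.mk n G L).Contains (pathEO (k + 1) l) ↔
      ∃ v : Fin (k + 1) ↪ Fin n, (∀ i : Fin k, G.Adj (v i.castSucc) (v i.succ)) ∧
        ∀ i j : Fin k, l.getD i 0 < l.getD j 0 ↔
          L s(v i.castSucc, v i.succ) < L s(v j.castSucc, v j.succ) := by
  have adj (i : Fin k) : (pathEO (k + 1) l).graph.Adj i.castSucc i.succ :=
    pathEO_adj_iff.mpr ⟨i, rfl⟩
  constructor
  · rintro ⟨v, hadj, hlt⟩
    refine ⟨v, fun i => hadj _ _ (adj i), fun i j => ?_⟩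
    rw [← pathEO_label_castSucc_succ i, ← pathEO_label_castSucc_succ j]
    exact hlt _ _ _ _ (adj i) (adj j)
  · rintro ⟨v, hadj, hlt⟩
    have hmap {a b : Fin (k + 1)} {i : Fin k} (h : s(a, b) = s(i.castSucc, i.succ)) :
        s(v a, v b) = s(v i.castSucc, v i.succ) := congrArg (Sym2.map v) h
    refine ⟨v, fun a b hab => ?_, fun a b c d hab hcd => ?_⟩
    · obtain ⟨i, hi⟩ := pathEO_adj_iff.mp hab
      exact (G.adj_congr_of_sym2 (hmap hi)).mpr (hadj i)
    · obtain ⟨i, hi⟩ := pathEO_adj_iff.mp hab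
      obtain ⟨j, hj⟩ := pathEO_adj_iff.mp hcd
      change _ ↔ L s(v a, v b) < L s(v c, v d)
      rw [hmap hi, hmap hj, ← hlt i j, ← pathEO_label_castSucc_succ i,
        ← pathEO_label_castSucc_succ j]
      exact iff_of_eq (congrArg₂
        (fun e f => (pathEO (k + 1) l).label e < (pathEO (k + 1) l).label f) hi hj)

theorem exists_embedding_fin_five_iff {V : Type*} {P : V → V → V → V → V → Prop} :
    (∃ v : Fin 5 ↪ V, P (v 0) (v 1) (v 2) (v 3) (v 4)) ↔
      ∃ a b c d e, [a, b, c, d, e].Nodup ∧ P a b c d e := by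
  constructor
  · rintro ⟨v, h⟩
    exact ⟨v 0, v 1, v 2, v 3, v 4, by simp [v.injective.eq_iff], h⟩
  · rintro ⟨a, b, c, d, e, hnodup, h⟩
    exact ⟨⟨![a, b, c, d, e], List.nodup_ofFn.mp (by simpa using hnodup)⟩, h⟩

theorem contains_P5_1423_iff {n : ℕ} {G : SimpleGraph (Fin n)} {L : Sym2 (Fin n) → ℕ} :
    (EOGraph.mk n G L).Contains P5_1423 ↔ HasPath1423 G L := by
  refine contains_pathEO_iff.trans <| Iff.trans (exists_congr fun v => ?_)
    exists_embedding_fin_five_iff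
  refine ⟨fun ⟨hadj, hlt⟩ => ?_, fun ⟨hab, hbc, hcd, hde, _, _, _⟩ => ?_⟩
  · exact ⟨hadj 0, hadj 1, hadj 2, hadj 3, (hlt 0 2).mp (by decide), (hlt 2 3).mp (by decide),
      (hlt 3 1).mp (by decide)⟩
  · refine ⟨fun i => by fin_cases i <;> assumption, fun i j => ?_⟩
    fin_cases i <;> fin_cases j <;> simp <;> omega

theorem contains_P5_2314_iff {n : ℕ} {G : SimpleGraph (Fin n)} {L : Sym2 (Fin n) → ℕ} :
    (EOGraph.mk n G L).Contains P5_2314 ↔ HasPath2314 G L := by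
  refine contains_pathEO_iff.trans <| Iff.trans (exists_congr fun v => ?_)
    exists_embedding_fin_five_iff
  refine ⟨fun ⟨hadj, hlt⟩ => ?_, fun ⟨hab, hbc, hcd, hde, _, _, _⟩ => ?_⟩
  · exact ⟨hadj 0, hadj 1, hadj 2, hadj 3, (hlt 2 0).mp (by decide), (hlt 0 1).mp (by decide),
      (hlt 1 3).mp (by decide)⟩
  · refine ⟨fun i => by fin_cases i <;> assumption, fun i j => ?_⟩
    fin_cases i <;> fin_cases j <;> simp <;> omega

end Containment

section Avoidance

theorem exists_nat_lt_iff_lt {ι α : Type*} [Finite ι] [LinearOrder α] (L : ι → α) :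
    ∃ r : ι → ℕ, ∀ i j, r i < r j ↔ L i < L j := by
  have := Fintype.ofFinite (Set.range L)
  refine ⟨fun i => (monoEquivOfFin (Set.range L) rfl).symm ⟨L i, Set.mem_range_self i⟩,
    fun i j => ?_⟩
  rw [Fin.val_fin_lt, OrderIso.lt_iff_lt, Subtype.mk_lt_mk]

theorem canAvoid_of_injOn {n : ℕ} {α : Type*} [LinearOrder α] {G : SimpleGraph (Fin n)}
    {F : Set EOGraph} {L : Sym2 (Fin n) → α} (hL : Set.InjOn L G.edgeSet)
    (hF : ∀ r : Sym2 (Fin n) → ℕ, (∀ e f, r e < r f ↔ L e < L f) →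
      (EOGraph.mk n G r).AvoidsFam F) : CanAvoid G F := by
  obtain ⟨r, hr⟩ := exists_nat_lt_iff_lt L
  refine ⟨r, fun e he f hf (hef : r e = r f) => hL he hf ?_, hF r hr⟩
  refine eq_of_le_of_ge ?_ ?_ <;> simp [← not_lt, ← hr, hef]

variable {V β : Type*} [LinearOrder β]

/-- The labelling that compares edges by their larger end under `k`, then by their smaller end. -/
def supLabel (k : V → β) (e : Sym2 V) : β ×ₗ β :=
  toLex ((e.map k).sup, (e.map k).inf)

theorem supLabel_injective {k : V → β} (hk : Function.Injective k) :
    Function.Injective (supLabel k) := by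
  intro e f h
  simp only [supLabel, EmbeddingLike.apply_eq_iff_eq, Prod.mk.injEq] at h
  exact Sym2.map.injective hk (Sym2.inf_eq_inf_and_sup_eq_sup.mp h.symm)

theorem max_le_max_of_supLabel_lt {k : V → β} {u v x y : V}
    (h : supLabel k s(u, v) < supLabel k s(x, y)) : max (k u) (k v) ≤ max (k x) (k y) :=
  Prod.Lex.monotone_fst _ _ h.le

variable {α : Type*} [LT α] {G : SimpleGraph V} {L : Sym2 V → α} {k : V → β}

-- On a path with `ab < cd < de < bc`, the larger end of `bc` would be the larger end of `cd` too if
-- it is `b`, and of `de` too if it is `c`.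
theorem not_hasPath1423_of_max_le_max (hk : Function.Injective k)
    (hL : ∀ ⦃u v x y⦄, G.Adj u v → G.Adj x y → L s(u, v) < L s(x, y) →
      max (k u) (k v) ≤ max (k x) (k y)) : ¬ HasPath1423 G L := by
  rintro ⟨a, b, c, d, e, hnodup, hab, hbc, hcd, hde, h₁, h₂, h₃⟩
  simp only [List.nodup_cons, List.mem_cons] at hnodup
  have hcd_le := hL hcd hde h₂
  have hde_le := hL hde hbc h₃
  rcases lt_or_gt_of_ne (hk.ne hbc.ne) with hlt | hlt
  · rw [max_eq_right hlt.le] at hde_le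
    have hmax : max (k d) (k e) = k c := hde_le.antisymm ((le_max_left _ _).trans hcd_le)
    rcases max_choice (k d) (k e) with h | h <;> have := hk (h.symm.trans hmax) <;> grind
  · rw [max_eq_left hlt.le] at hde_le
    have hmax : max (k c) (k d) = k b :=
      (hcd_le.trans hde_le).antisymm ((le_max_right _ _).trans (hL hab hcd h₁))
    rcases max_choice (k c) (k d) with h | h <;> have := hk (h.symm.trans hmax) <;> grind

theorem not_hasPath2314_of_min_le_min (hk : Function.Injective k)
    (hL : ∀ ⦃u v x y⦄, G.Adj u v → G.Adj x y → L s(u, v) < L s(x, y) →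
      min (k u) (k v) ≤ min (k x) (k y)) : ¬ HasPath2314 G L := by
  rw [← hasPath1423_toDual_comp_iff]
  exact not_hasPath1423_of_max_le_max (k := OrderDual.toDual ∘ k)
    (OrderDual.toDual.injective.comp hk) fun u v x y huv hxy h => hL hxy huv h

theorem canAvoid_P5_1423 {n : ℕ} (G : SimpleGraph (Fin n)) : CanAvoid G {P5_1423} := by
  refine canAvoid_of_injOn (supLabel_injective Function.injective_id).injOn fun r hr => ?_
  rintro _ rfl
  exact contains_P5_1423_iff.not.mpr <| not_hasPath1423_of_max_le_max Function.injective_id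
    fun u v x y _ _ h => max_le_max_of_supLabel_lt ((hr _ _).mp h)

theorem canAvoid_P5_2314 {n : ℕ} (G : SimpleGraph (Fin n)) : CanAvoid G {P5_2314} := by
  have hinj := supLabel_injective (OrderDual.toDual (α := Fin n)).injective
  refine canAvoid_of_injOn (OrderDual.toDual.injective.comp hinj).injOn fun r hr => ?_
  rintro _ rfl
  exact contains_P5_2314_iff.not.mpr <| not_hasPath2314_of_min_le_min Function.injective_id
    fun u v x y _ _ h => max_le_max_of_supLabel_lt ((hr _ _).mp h)

theorem exists_max_min_eq_of_ne {V : Type*} [LinearOrder V] (C : V → Bool) {u v : V}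
    (h : C u ≠ C v) :
    ∃ w, max (toLex (C u, u)) (toLex (C v, v)) = toLex (true, w) ∧
      min (toLex (!C u, u)) (toLex (!C v, v)) = toLex (false, w) := by
  cases hu : C u <;> cases hv : C v
  · exact absurd (hu.trans hv.symm) h
  · exact ⟨v, by simp [Prod.Lex.toLex_le_toLex], by simp [Prod.Lex.toLex_le_toLex]⟩
  · exact ⟨u, by simp [Prod.Lex.toLex_le_toLex], by simp [Prod.Lex.toLex_le_toLex]⟩
  · exact absurd (hu.trans hv.symm) h

-- The larger end of an edge under `(C v, v)` is its end of colour `true`, which is its smaller end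
-- under `(!C v, v)`; so the two criteria above apply to the same order.
theorem canAvoid_pair_of_colorable_two {n : ℕ} {G : SimpleGraph (Fin n)} (hG : G.Colorable 2) :
    CanAvoid G {P5_1423, P5_2314} := by
  obtain ⟨C⟩ : Nonempty (G.Coloring Bool) := ⟨hG.toColoring (by simp)⟩
  have injective_key (f : Fin n → Bool) : Function.Injective fun v => toLex (f v, v) :=
    fun u v h => congrArg Prod.snd h
  refine canAvoid_of_injOn (supLabel_injective (injective_key C)).injOn fun r hr => ?_
  have max_le_max ⦃u v x y⦄ (h : r s(u, v) < r s(x, y)) :=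
    max_le_max_of_supLabel_lt ((hr _ _).mp h)
  rintro _ (rfl | rfl)
  · exact contains_P5_1423_iff.not.mpr <| not_hasPath1423_of_max_le_max (injective_key C)
      fun u v x y _ _ h => max_le_max h
  · refine contains_P5_2314_iff.not.mpr <| not_hasPath2314_of_min_le_min
      (injective_key fun v => !C v) fun u v x y huv hxy h => ?_
    obtain ⟨w, hmax, hmin⟩ := exists_max_min_eq_of_ne C (C.valid huv)
    obtain ⟨z, hmax', hmin'⟩ := exists_max_min_eq_of_ne C (C.valid hxy)
    have hwz := max_le_max h
    rw [hmax, hmax', Prod.Lex.toLex_le_toLex'] at hwz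
    rw [hmin, hmin', Prod.Lex.toLex_le_toLex']
    exact ⟨le_rfl, fun _ => hwz.2 rfl⟩

end Avoidance

section Domination

variable {V α : Type*} [LinearOrder α] {G : SimpleGraph V} {L : Sym2 V → α}

theorem lt_of_not_hasPath1423 (h : ¬ HasPath1423 G L) (hL : Set.InjOn L G.edgeSet)
    {a b c d e : V} (hnodup : [a, b, c, d, e].Nodup) (hab : G.Adj a b) (hbc : G.Adj b c)
    (hcd : G.Adj c d) (hde : G.Adj d e) (h₁ : L s(a, b) < L s(c, d))
    (h₂ : L s(c, d) < L s(d, e)) : L s(b, c) < L s(d, e) := by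
  refine lt_of_le_of_ne ?_ fun heq => ?_
  · exact not_lt.mp fun h₃ => h ⟨a, b, c, d, e, hnodup, hab, hbc, hcd, hde, h₁, h₂, h₃⟩
  · have := hL hbc hde heq
    simp only [List.nodup_cons, List.mem_cons, Sym2.eq_iff] at hnodup this
    grind

/-- The vertex `t` dominates `S`: every edge `de` inside `S` lies below the edge joining `t` to
its end `d`, whenever the latter is an edge of `G`. -/
def Dominates (G : SimpleGraph V) (L : Sym2 V → α) (S : Finset V) (t : V) : Prop :=
  ∀ d ∈ S, ∀ e ∈ S, G.Adj t d → G.Adj d e → L s(d, e) < L s(t, d)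

theorem Dominates.mono {S T : Finset V} {t : V} (h : Dominates G L T t) (hST : S ⊆ T) :
    Dominates G L S t :=
  fun d hd e he => h d (hST hd) e (hST he)

variable [DecidableEq V]

-- An edge `de` above `vd` would give `xu < vd < de ≤ uv` on the path `xuvde`.
theorem dominates_sdiff_of_le_max (h : ¬ HasPath1423 G L) (hL : Set.InjOn L G.edgeSet)
    {S : Finset V} {u v x : V} (huv : G.Adj u v) (hux : G.Adj u x) (hxv : x ≠ v)
    (hmax : ∀ d ∈ S, ∀ e ∈ S, G.Adj d e → L s(d, e) ≤ L s(u, v))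
    (hmin : ∀ d ∈ S \ {u, v}, G.Adj v d → L s(u, x) ≤ L s(v, d)) :
    Dominates G L (S \ {v, u, x}) v := by
  intro d hd e he hvd hde
  simp only [Finset.mem_sdiff, Finset.mem_insert, Finset.mem_singleton, not_or] at hd he hmin
  have hux_lt : L s(x, u) < L s(v, d) := by
    rw [Sym2.eq_swap]
    refine (hmin d ⟨hd.1, hd.2.2.1, hd.2.1⟩ hvd).lt_of_ne fun heq => ?_
    have := hL hux hvd heq
    simp_all [huv.ne]
  by_contra! hle
  have hvd_lt : L s(v, d) < L s(d, e) := hle.lt_of_ne fun heq => by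
    have := hL hvd hde heq
    simp_all [eq_comm]
  have hnodup : [x, u, v, d, e].Nodup := by
    simp [huv.ne, hux.ne', hxv, hde.ne, eq_comm (b := d), eq_comm (b := e), hd, he]
  exact (lt_of_not_hasPath1423 h hL hnodup hux.symm huv hvd hde hux_lt hvd_lt).not_ge
    (hmax d hd.1 e he.1 hde)

-- Take the largest edge `uv` inside `S`, and the smallest edge from `{u, v}` to the rest of `S`.
theorem exists_dominates_sdiff (h : ¬ HasPath1423 G L) (hL : Set.InjOn L G.edgeSet)
    {S : Finset V} (hS : S.Nonempty) :
    ∃ t ∈ S, ∃ x y, Dominates G L (S \ {t, x, y}) t := by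
  classical
  rcases ((S ×ˢ S).filter fun p => G.Adj p.1 p.2).eq_empty_or_nonempty with hE | hE
  · obtain ⟨t, ht⟩ := hS
    refine ⟨t, ht, t, t, fun d hd e _ _ hde => ?_⟩
    exact absurd hde (by simp_all [Finset.filter_eq_empty_iff])
  obtain ⟨⟨u, v⟩, huv, hmax⟩ := Finset.exists_max_image _ (fun p => L s(p.1, p.2)) hE
  simp only [Finset.mem_filter, Finset.mem_product, Prod.forall] at huv hmax
  obtain ⟨⟨hu, hv⟩, huv⟩ := huv
  rcases ((({u, v} : Finset V) ×ˢ (S \ {u, v})).filter fun p => G.Adj p.1 p.2).eq_empty_or_nonempty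
    with hF | hF
  · refine ⟨v, hv, u, u, fun d hd e _ hvd _ => ?_⟩
    simp_all [Finset.filter_eq_empty_iff]
  obtain ⟨⟨w, x⟩, hwx, hmin⟩ := Finset.exists_min_image _ (fun p => L s(p.1, p.2)) hF
  simp only [Finset.mem_filter, Finset.mem_product, Prod.forall, Finset.mem_insert,
    Finset.mem_singleton, Finset.mem_sdiff, not_or] at hwx hmin
  obtain ⟨⟨rfl | rfl, hx⟩, hwx⟩ := hwx
  · refine ⟨v, hv, w, x, dominates_sdiff_of_le_max h hL huv hwx hx.2.2 ?_ ?_⟩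
    · exact fun d hd e he hde => hmax d e ⟨⟨hd, he⟩, hde⟩
    · exact fun d hd hvd => hmin v d ⟨⟨.inr rfl, by simpa using hd⟩, hvd⟩
  · refine ⟨u, hu, w, x, dominates_sdiff_of_le_max h hL huv.symm hwx hx.2.1 ?_ ?_⟩
    · rw [Sym2.eq_swap]
      exact fun d hd e he hde => hmax d e ⟨⟨hd, he⟩, hde⟩
    · exact fun d hd hud => hmin u d ⟨⟨.inl rfl, by simpa [and_comm] using hd⟩, hud⟩

theorem exists_dominates_family (h : ¬ HasPath1423 G L) (hL : Set.InjOn L G.edgeSet) (k : ℕ)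
    {S : Finset V} (hS : 3 * k ≤ S.card) :
    ∃ (t : Fin k → V) (R : Finset V), R ⊆ S ∧ S.card ≤ R.card + 3 * k ∧ (∀ i, t i ∈ S) ∧
      (∀ i, Dominates G L R (t i)) ∧
      ∀ i j, i < j → t i ≠ t j ∧ Dominates G L (insert (t j) R) (t i) := by
  induction k generalizing S with
  | zero => exact ⟨Fin.elim0, S, subset_rfl, by simp, by simp, by simp, by simp⟩
  | succ k ih =>
    obtain ⟨v, hv, x, y, hdom⟩ :=
      exists_dominates_sdiff h hL (S := S) (Finset.card_pos.mp (by omega))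
    have hcard : S.card ≤ (S \ {v, x, y}).card + 3 :=
      (Finset.card_le_card_sdiff_add_card (t := {v, x, y})).trans
        (Nat.add_le_add_left Finset.card_le_three _)
    obtain ⟨t, R, hRS, hR, htS, htR, ht⟩ := ih (S := S \ {v, x, y}) (by omega)
    refine ⟨Fin.cons v t, R, hRS.trans Finset.sdiff_subset, by omega, ?_, ?_, ?_⟩
    · exact Fin.cases hv fun i => Finset.sdiff_subset (htS i)
    · exact Fin.cases (hdom.mono hRS) htR
    · refine Fin.cases (Fin.cases (by simp) fun j _ => ⟨?_, ?_⟩)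
        fun i => Fin.cases (by simp) fun j hij => ht i j (Fin.succ_lt_succ_iff.mp hij)
      · have := htS j
        rw [Fin.cons_zero, Fin.cons_succ]
        grind
      · exact hdom.mono (Finset.insert_subset (htS j) hRS)

theorem exists_dominates_pair_of_coloring [Fintype V] {ι : Type*} [Fintype ι]
    (h : ¬ HasPath1423 G L) (hL : Set.InjOn L G.edgeSet) (C : V → ι)
    (hV : 3 * (Fintype.card ι + 1) ≤ Fintype.card V) :
    ∃ (t₀ t₁ : V) (R : Finset V), t₀ ≠ t₁ ∧ C t₀ = C t₁ ∧ Dominates G L (insert t₁ R) t₀ ∧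
      Dominates G L R t₁ ∧ Rᶜ.card ≤ 3 * (Fintype.card ι + 1) := by
  obtain ⟨t, R, -, hR, -, htR, ht⟩ := exists_dominates_family h hL _ (S := Finset.univ) hV
  obtain ⟨i, j, hij, hC⟩ := Fintype.exists_ne_map_eq_of_card_lt (C ∘ t) (by simp)
  wlog hlt : i < j generalizing i j
  · exact this j i hij.symm hC.symm (hij.symm.lt_of_le (not_lt.mp hlt))
  refine ⟨t i, t j, R, (ht i j hlt).1, hC, (ht i j hlt).2, htR j, ?_⟩
  rw [Finset.card_compl]
  exact Nat.sub_le_iff_le_add'.mpr hR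

end Domination

section NestedApexPair

variable {V α : Type*} [LinearOrder α] {G : SimpleGraph V} {L : Sym2 V → α} {t₀ t₁ : V}
  {B C : Finset V}

/-- Two vertices `t₀` and `t₁` joined to all of a complete bipartite graph with sides `B` and `C`,
such that every edge at `t₁` lies above the edges of the bipartite graph it meets and below the
edge at `t₀` with the same foot. -/
structure NestedApexPair (G : SimpleGraph V) (L : Sym2 V → α) (t₀ t₁ : V) (B C : Finset V) :
    Prop where
  ne : t₀ ≠ t₁
  adj : ∀ b ∈ B, ∀ c ∈ C, G.Adj b c
  adj_left : ∀ b ∈ B, G.Adj t₀ b ∧ G.Adj t₁ b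
  adj_right : ∀ c ∈ C, G.Adj t₀ c ∧ G.Adj t₁ c
  lt_apex : ∀ b ∈ B, ∀ c ∈ C, L s(b, c) < L s(t₁, b) ∧ L s(b, c) < L s(t₁, c)
  apex_lt_left : ∀ b ∈ B, L s(t₁, b) < L s(t₀, b)
  apex_lt_right : ∀ c ∈ C, L s(t₁, c) < L s(t₀, c)

theorem NestedApexPair.symm (h : NestedApexPair G L t₀ t₁ B C) :
    NestedApexPair G L t₀ t₁ C B where
  ne := h.ne
  adj c hc b hb := (h.adj b hb c hc).symm
  adj_left := h.adj_right
  adj_right := h.adj_left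
  lt_apex c hc b hb := by
    rw [Sym2.eq_swap]
    exact (h.lt_apex b hb c hc).symm
  apex_lt_left := h.apex_lt_right
  apex_lt_right := h.apex_lt_left

theorem NestedApexPair.label_ne (h : NestedApexPair G L t₀ t₁ B C) (hL : Set.InjOn L G.edgeSet)
    {b b' c c' : V} (hb : b ∈ B) (hb' : b' ∈ B) (hc : c ∈ C) (hc' : c' ∈ C)
    (hne : (b, c) ≠ (b', c')) : L s(b, c) ≠ L s(b', c') := by
  intro heq
  rcases Sym2.eq_iff.mp (hL (h.adj b hb c hc) (h.adj b' hb' c' hc') heq) with ⟨rfl, rfl⟩ | ⟨h', -⟩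
  · exact hne rfl
  · exact (h.adj b hb c' hc').ne h'

theorem NestedApexPair.right_lt_left (h : NestedApexPair G L t₀ t₁ B C)
    (h1423 : ¬ HasPath1423 G L) (hL : Set.InjOn L G.edgeSet) {b b' c : V} (hb : b ∈ B)
    (hb' : b' ∈ B) (hc : c ∈ C) (hne : b ≠ b') (hlt : L s(b', c) < L s(t₁, b)) :
    L s(t₁, c) < L s(t₀, b) := by
  have hbc := h.adj b hb c hc
  have hb'c := h.adj b' hb' c hc
  obtain ⟨ht₀b, ht₁b⟩ := h.adj_left b hb
  obtain ⟨ht₀b', ht₁b'⟩ := h.adj_left b' hb'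
  obtain ⟨ht₀c, ht₁c⟩ := h.adj_right c hc
  have hnodup : [b', c, t₁, b, t₀].Nodup := by
    simp [hb'c.ne, ht₁b'.ne', hne.symm, ht₀b'.ne', ht₁c.ne', hbc.ne', ht₀c.ne', ht₁b.ne, h.ne.symm,
      ht₀b.ne']
  have hlt' : L s(t₁, b) < L s(b, t₀) := by
    simpa only [Sym2.eq_swap] using h.apex_lt_left b hb
  simpa only [Sym2.eq_swap] using
    lt_of_not_hasPath1423 h1423 hL hnodup hb'c ht₁c.symm ht₁b ht₀b.symm hlt hlt'

theorem NestedApexPair.hasPath2314_of_lt (h : NestedApexPair G L t₀ t₁ B C) {b c c' : V}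
    (hb : b ∈ B) (hc : c ∈ C) (hc' : c' ∈ C) (h₁ : L s(b, c') < L s(t₁, c))
    (h₂ : L s(t₁, c) < L s(t₁, c')) (h₃ : L s(t₁, c') < L s(t₀, b)) : HasPath2314 G L := by
  have hbc := h.adj b hb c hc
  have hbc' := h.adj b hb c' hc'
  obtain ⟨ht₀b, ht₁b⟩ := h.adj_left b hb
  obtain ⟨ht₀c, ht₁c⟩ := h.adj_right c hc
  obtain ⟨ht₀c', ht₁c'⟩ := h.adj_right c' hc'
  have hcc' : c ≠ c' := fun heq => h₂.ne (by rw [heq])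
  refine ⟨c, t₁, c', b, t₀, ?_, ht₁c.symm, ht₁c', hbc'.symm, ht₀b.symm, ?_⟩
  · simp [ht₁c.ne', hcc', hbc.ne', ht₀c.ne', ht₁c'.ne, ht₁b.ne, h.ne.symm, hbc'.ne', ht₀c'.ne',
      ht₀b.ne']
  · rw [Sym2.eq_swap (a := c') (b := b), Sym2.eq_swap (a := c), Sym2.eq_swap (b := t₀)]
    exact ⟨h₁, h₂, h₃⟩

-- If `P_5^{1423}` does not occur on `b₁c₁b₀c₀t₁`, on `b₁c₁t₁b₀t₀` and on `b₁c₀t₁b₀t₀`, then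
-- `b₀c₁ < t₁c₀` and both `t₁c₁` and `t₁c₀` lie below `t₀b₀`. Depending on which of `t₁c₀` and
-- `t₁c₁` is smaller, `c₀t₁c₁b₀t₀` or `c₁t₁c₀b₀t₀` is a `P_5^{2314}`.
theorem NestedApexPair.hasPath_of_lt (h : NestedApexPair G L t₀ t₁ B C)
    (hL : Set.InjOn L G.edgeSet) {b₀ b₁ c₀ c₁ : V} (hb₀ : b₀ ∈ B) (hb₁ : b₁ ∈ B) (hc₀ : c₀ ∈ C)
    (hc₁ : c₁ ∈ C) (hb : b₀ ≠ b₁) (hc : c₀ ≠ c₁) (hlt : L s(b₁, c₁) < L s(b₀, c₀))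
    (hlt₀₀ : L s(b₀, c₀) < L s(b₀, c₁)) (hlt₁₀ : L s(b₁, c₀) < L s(b₀, c₁)) :
    HasPath1423 G L ∨ HasPath2314 G L := by
  by_contra! hpath
  obtain ⟨h1423, h2314⟩ := hpath
  obtain ⟨hb₀t₁, hc₁t₁⟩ := h.lt_apex b₀ hb₀ c₁ hc₁
  obtain ⟨-, ht₁c₀⟩ := h.adj_right c₀ hc₀
  obtain ⟨-, ht₁c₁⟩ := h.adj_right c₁ hc₁
  have hb₀c₀ := h.adj b₀ hb₀ c₀ hc₀
  have hb₀c₁ := h.adj b₀ hb₀ c₁ hc₁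
  have hb₁c₀ := h.adj b₁ hb₁ c₀ hc₀
  have hb₁c₁ := h.adj b₁ hb₁ c₁ hc₁
  have hc₀t₁ : L s(b₀, c₁) < L s(t₁, c₀) := by
    have hnodup : [b₁, c₁, b₀, c₀, t₁].Nodup := by
      simp [hb₁c₁.ne, hb.symm, hb₁c₀.ne, (h.adj_left b₁ hb₁).2.ne', hb₀c₁.ne', hc.symm, ht₁c₁.ne',
        hb₀c₀.ne, (h.adj_left b₀ hb₀).2.ne', ht₁c₀.ne']
    have hlt' : L s(b₀, c₀) < L s(c₀, t₁) := by
      simpa only [Sym2.eq_swap] using (h.lt_apex b₀ hb₀ c₀ hc₀).2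
    simpa only [Sym2.eq_swap] using
      lt_of_not_hasPath1423 h1423 hL hnodup hb₁c₁ hb₀c₁.symm hb₀c₀ ht₁c₀.symm hlt hlt'
  have hc₁_lt : L s(t₁, c₁) < L s(t₀, b₀) :=
    h.right_lt_left h1423 hL hb₀ hb₁ hc₁ hb (hlt.trans (hlt₀₀.trans hb₀t₁))
  have hc₀_lt : L s(t₁, c₀) < L s(t₀, b₀) :=
    h.right_lt_left h1423 hL hb₀ hb₁ hc₀ hb (hlt₁₀.trans hb₀t₁)
  rcases lt_trichotomy (L s(t₁, c₀)) (L s(t₁, c₁)) with hlt_t₁ | heq | hlt_t₁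
  · exact h2314 (h.hasPath2314_of_lt hb₀ hc₀ hc₁ hc₀t₁ hlt_t₁ hc₁_lt)
  · exact hc (Sym2.congr_right.mp (hL ht₁c₀ ht₁c₁ heq))
  · exact h2314 (h.hasPath2314_of_lt hb₀ hc₁ hc₀ (hlt₀₀.trans hc₁t₁) hlt_t₁ hc₀_lt)

theorem NestedApexPair.hasPath (h : NestedApexPair G L t₀ t₁ B C)
    (hL : Set.InjOn L G.edgeSet) (hB : 1 < B.card) (hC : 1 < C.card) :
    HasPath1423 G L ∨ HasPath2314 G L := by
  have hBC : (B ×ˢ C).Nonempty :=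
    (Finset.card_pos.mp (by omega)).product (Finset.card_pos.mp (by omega))
  obtain ⟨⟨b₀, c₁⟩, hmem, hmax⟩ := Finset.exists_max_image _ (fun p => L s(p.1, p.2)) hBC
  obtain ⟨hb₀, hc₁⟩ := Finset.mem_product.mp hmem
  obtain ⟨b₁, hb₁, hb⟩ := Finset.exists_mem_ne hB b₀
  obtain ⟨c₀, hc₀, hc⟩ := Finset.exists_mem_ne hC c₁
  have lt_max {b c : V} (hbB : b ∈ B) (hcC : c ∈ C) (hne : (b, c) ≠ (b₀, c₁)) :
      L s(b, c) < L s(b₀, c₁) :=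
    (hmax (b, c) (Finset.mk_mem_product hbB hcC)).lt_of_ne (h.label_ne hL hbB hb₀ hcC hc₁ hne)
  have hlt₀₀ := lt_max hb₀ hc₀ (by simp [hc])
  have hlt₁₁ := lt_max hb₁ hc₁ (by simp [hb])
  have hlt₁₀ := lt_max hb₁ hc₀ (by simp [hb])
  rcases (h.label_ne hL hb₁ hb₀ hc₁ hc₀ (by simp [hb])).lt_or_gt with hlt | hlt
  · exact h.hasPath_of_lt hL hb₀ hb₁ hc₀ hc₁ hb.symm hc hlt hlt₀₀ hlt₁₀
  · exact h.symm.hasPath_of_lt hL hc₁ hc₀ hb₁ hb₀ hc.symm hb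
      (by simpa only [Sym2.eq_swap] using hlt)
      (by simpa only [Sym2.eq_swap] using hlt₁₁) (by simpa only [Sym2.eq_swap] using hlt₁₀)

end NestedApexPair

section CompleteMultipartite

variable {V ι α : Type*} [DecidableEq ι] [LinearOrder α] {G : SimpleGraph V} {L : Sym2 V → α}
  {C : V → ι}

theorem nestedApexPair_of_dominates [DecidableEq V] (hC : ∀ u v, C u ≠ C v → G.Adj u v)
    {t₀ t₁ : V} {R : Finset V} (hne : t₀ ≠ t₁) (hCt : C t₀ = C t₁)
    (ht₀ : Dominates G L (insert t₁ R) t₀) (ht₁ : Dominates G L R t₁) {i j : ι} (hi : i ≠ C t₁)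
    (hj : j ≠ C t₁) (hij : i ≠ j) :
    NestedApexPair G L t₀ t₁ (R.filter (C · = i)) (R.filter (C · = j)) := by
  have adj_apex {v : V} (hv : C v ≠ C t₁) : G.Adj t₀ v ∧ G.Adj t₁ v :=
    ⟨hC _ _ (hCt ▸ hv.symm), hC _ _ hv.symm⟩
  have apex_lt {v : V} (hvR : v ∈ R) (hv : C v ≠ C t₁) : L s(t₁, v) < L s(t₀, v) := by
    rw [Sym2.eq_swap (a := t₁)]
    exact ht₀ v (by simp [hvR]) t₁ (by simp) (adj_apex hv).1 (hC _ _ hv)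
  constructor
  · exact hne
  all_goals simp only [Finset.mem_filter]
  · rintro b ⟨-, rfl⟩ c ⟨-, rfl⟩
    exact hC b c hij
  · rintro b ⟨-, rfl⟩
    exact adj_apex hi
  · rintro c ⟨-, rfl⟩
    exact adj_apex hj
  · rintro b ⟨hbR, rfl⟩ c ⟨hcR, rfl⟩
    refine ⟨ht₁ b hbR c hcR (adj_apex hi).2 (hC _ _ hij), ?_⟩
    rw [Sym2.eq_swap]
    exact ht₁ c hcR b hbR (adj_apex hj).2 (hC _ _ hij.symm)
  · rintro b ⟨hbR, rfl⟩
    exact apex_lt hbR hi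
  · rintro c ⟨hcR, rfl⟩
    exact apex_lt hcR hj

theorem hasPath_of_complete_multipartite [Fintype V] [Fintype ι] (hL : Set.InjOn L G.edgeSet)
    (hC : ∀ u v, C u ≠ C v → G.Adj u v) (hι : 3 ≤ Fintype.card ι)
    (hclass : ∀ i, 3 * (Fintype.card ι + 1) + 2 ≤ (Finset.univ.filter (C · = i)).card) :
    HasPath1423 G L ∨ HasPath2314 G L := by
  classical
  by_cases h : HasPath1423 G L
  · exact Or.inl h
  have hV : 3 * (Fintype.card ι + 1) ≤ Fintype.card V := by
    obtain ⟨i⟩ : Nonempty ι := Fintype.card_pos_iff.mp (by omega)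
    have := (hclass i).trans (Finset.card_le_univ _)
    omega
  obtain ⟨t₀, t₁, R, hne, hCt, ht₀, ht₁, hR⟩ := exists_dominates_pair_of_coloring h hL C hV
  obtain ⟨i, hi⟩ := Fintype.exists_ne_of_one_lt_card (by omega) (C t₁)
  obtain ⟨j, hj, hji⟩ := ENat.exists_ne_ne_of_three_le (by simpa using hι) (C t₁) i
  have one_lt_card (i : ι) : 1 < (R.filter (C · = i)).card := by
    have hsub : Finset.univ.filter (C · = i) ⊆ R.filter (C · = i) ∪ Rᶜ := fun v hv => by
      by_cases hvR : v ∈ R <;> simp_all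
    have := (hclass i).trans ((Finset.card_le_card hsub).trans (Finset.card_union_le _ _))
    omega
  exact (nestedApexPair_of_dominates hC hne hCt ht₀ ht₁ hi hj hji.symm).hasPath hL
    (one_lt_card i) (one_lt_card j)

theorem not_canAvoid_turanGraph {r t : ℕ} (hr : 3 ≤ r) (ht : 3 * (r + 1) + 2 ≤ t) :
    ¬ CanAvoid (SimpleGraph.turanGraph (r * t) r) {P5_1423, P5_2314} := by
  rintro ⟨L, hL, havoid⟩
  let e := SimpleGraph.completeEquipartiteGraph.turanGraph (r := r) (t := t)
  have adj_of_ne (u v : Fin (r * t)) (huv : (e.symm u).1 ≠ (e.symm v).1) :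
      (SimpleGraph.turanGraph (r * t) r).Adj u v :=
    e.symm.map_adj_iff.mp huv
  have card_class (i : Fin r) : (Finset.univ.filter fun v => (e.symm v).1 = i).card = t := by
    rw [Finset.card_equiv e.symm.toEquiv (t := {i} ×ˢ Finset.univ)
      (by simp [-Finset.singleton_product])]
    simp
  rcases hasPath_of_complete_multipartite (fun e he f hf => hL e he f hf) adj_of_ne
    (by simpa using hr) (fun i => by simpa [card_class] using ht) with h | h
  · exact havoid P5_1423 (by simp) (contains_P5_1423_iff.mpr h)
  · exact havoid P5_2314 (by simp) (contains_P5_2314_iff.mpr h)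

theorem turanGraph_colorable (r t : ℕ) : (SimpleGraph.turanGraph (r * t) r).Colorable r :=
  (SimpleGraph.completeEquipartiteGraph_colorable).of_hom
    SimpleGraph.completeEquipartiteGraph.turanGraph.symm.toHom

end CompleteMultipartite

section OrderChromaticNumber

theorem orderChrom_eq_top {F : Set EOGraph}
    (hF : ∀ (n : ℕ) (G : SimpleGraph (Fin n)), CanAvoid G F) : orderChrom F = ⊤ := by
  simp [orderChrom, hF]

theorem orderChrom_le_chromaticNumber {F : Set EOGraph} {n : ℕ} {G : SimpleGraph (Fin n)}
    (hG : ¬ CanAvoid G F) : orderChrom F ≤ G.chromaticNumber :=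
  iInf₂_le_of_le n G (iInf_le _ hG)

theorem add_one_le_orderChrom {F : Set EOGraph} {k : ℕ}
    (hF : ∀ (n : ℕ) (G : SimpleGraph (Fin n)), G.Colorable k → CanAvoid G F) :
    (k : ℕ∞) + 1 ≤ orderChrom F := by
  refine le_iInf₂ fun n G => le_iInf fun hG => ?_
  refine Order.add_one_le_of_lt (not_le.mp fun h => hG (hF n G ?_))
  exact SimpleGraph.chromaticNumber_le_iff_colorable.mp h

end OrderChromaticNumber

end EdgeOrderedPath

open EdgeOrderedPath

/-- `χ'_<(P_5^{1423}) = χ'_<(P_5^{2314}) = ∞`, but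
`χ'_<({P_5^{1423}, P_5^{2314}}) = 3`. -/
theorem orderChrom_P5_1423_P5_2314 :
    orderChrom {P5_1423} = ⊤ ∧ orderChrom {P5_2314} = ⊤ ∧
      orderChrom {P5_1423, P5_2314} = 3 := by
  refine ⟨orderChrom_eq_top fun _ => canAvoid_P5_1423, orderChrom_eq_top fun _ => canAvoid_P5_2314,
    le_antisymm ?_ ?_⟩
  · calc
      orderChrom {P5_1423, P5_2314} ≤ (SimpleGraph.turanGraph (3 * 14) 3).chromaticNumber :=
        orderChrom_le_chromaticNumber (not_canAvoid_turanGraph le_rfl le_rfl)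
      _ ≤ 3 := (turanGraph_colorable 3 14).chromaticNumber_le
  · exact add_one_le_orderChrom (k := 2) fun _ _ => canAvoid_pair_of_colorable_two
end
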